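/- arXiv:2305.12294 — 5 statements merged into one kernel-verified Lean document; each statement's English description precedes it below -/
import Mathlib

section
/- Let M be an o-minimal structure. For any first-order formula φ(x;y) in the language of M (where x and y are tuples of variables) and any infinite definable set A ⊆ M^{|x|}, the family {φ(A;b) : b ∈ M^{|y|}} of subsets of A has cardinality at most |A|. -/
open FirstOrder FirstOrder.Language Set Cardinal Filter Topology

universe u

/-- A subset of a linear order is a finite union of points and open intervals
with endpoints in `M ∪ {-∞, +∞}` (lower endpoints in `WithBot M = M ∪ {-∞}`,
upper endpoints in `WithTop M = M ∪ {+∞}`). -/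
def IsFinUnionPointsIntervals {M : Type*} [LinearOrder M] (s : Set M) : Prop :=
  ∃ (P : Finset M) (I : Finset (WithBot M × WithTop M)),
    s = ↑P ∪ ⋃ p ∈ I, {x : M | p.1 < (x : WithBot M) ∧ (x : WithTop M) < p.2}

/-- `M` is an o-minimal `L`-structure: the language defines the linear order of `M`,
which is dense and without endpoints, and every subset of `M` definable with parameters
is a finite union of points and open intervals with endpoints in `M ∪ {-∞, +∞}`. -/
structure IsOMinimal (L : FirstOrder.Language) (M : Type*) [L.Structure M] [LinearOrder M] :
    Prop where
  denselyOrdered : DenselyOrdered M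
  noMinOrder : NoMinOrder M
  noMaxOrder : NoMaxOrder M
  definable_lt : (∅ : Set M).Definable L {x : Fin 2 → M | x 0 < x 1}
  tame : ∀ s : Set M, (Set.univ : Set M).Definable₁ L s → IsFinUnionPointsIntervals s

section aux

variable {M : Type u} [LinearOrder M]

def Fr (s : M → Prop) (y : M) : Prop :=
  ∀ l, l < y → ∀ r, y < r → ∃ t, (l < t ∧ t < r) ∧ ¬ (s t ↔ s y)

def Lv (F : M → Prop) : ℕ → M → Prop
  | 0, _ => True
  | n + 1, y => ∃ z, (z < y ∧ F z) ∧ Lv F n z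

def Rk (F : M → Prop) (n : ℕ) (y : M) : Prop := Lv F n y ∧ ¬ Lv F (n + 1) y

def Crit (s : M → Prop) (C : Finset M) : Prop :=
  ∀ y z, y ≤ z → (∀ c ∈ C, ¬ (y ≤ c ∧ c ≤ z)) → (s y ↔ s z)

theorem exists_crit (s : Set M) (h : IsFinUnionPointsIntervals s) :
    ∃ C : Finset M, Crit (fun y => y ∈ s) C := by
  classical
  obtain ⟨P, I, rfl⟩ := h
  have key : ∀ p : WithBot M × WithTop M, ∃ C : Finset M,
      Crit (fun x : M => p.1 < (x : WithBot M) ∧ (x : WithTop M) < p.2) C := by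
    rintro ⟨a, b⟩
    refine ⟨(a.recBotCoe ∅ fun x => {x}) ∪ (b.recTopCoe ∅ fun x => {x}), ?_⟩
    intro y z hyz hC
    induction a using WithBot.recBotCoe <;> induction b using WithTop.recTopCoe <;>
      simp [WithBot.coe_lt_coe, WithTop.coe_lt_coe] at hC ⊢ <;> grind
  choose C hC using key
  refine ⟨P ∪ I.biUnion C, ?_⟩
  intro y z hyz h
  have h1 : ∀ c ∈ P, ¬ (y ≤ c ∧ c ≤ z) := fun c hc => h c (by simp [hc])
  have h2 : ∀ p ∈ I, ∀ c ∈ C p, ¬ (y ≤ c ∧ c ≤ z) := fun p hp c hc =>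
    h c (Finset.mem_union_right _ (Finset.mem_biUnion.2 ⟨p, hp, hc⟩))
  have h3 : y ∉ P := fun hy => h1 y hy ⟨le_rfl, hyz⟩
  have h4 : z ∉ P := fun hy => h1 z hy ⟨hyz, le_rfl⟩
  simp only [Set.mem_union, Finset.mem_coe, h3, h4, false_or, Set.mem_iUnion, Set.mem_ofPred_eq]
  constructor
  · rintro ⟨p, hp, hh⟩
    exact ⟨p, hp, (hC p y z hyz (h2 p hp)).1 hh⟩
  · rintro ⟨p, hp, hh⟩
    exact ⟨p, hp, (hC p y z hyz (h2 p hp)).2 hh⟩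

theorem exists_left [DenselyOrdered M] [NoMinOrder M] (C : Finset M) (y : M) :
    ∃ l, l < y ∧ ∀ c ∈ C, c < y → c < l := by
  classical
  induction C using Finset.induction_on with
  | empty => obtain ⟨l, hl⟩ := exists_lt y; exact ⟨l, hl, by simp⟩
  | insert a C _ ih =>
    obtain ⟨l, hl, h⟩ := ih
    by_cases ha : a < y
    · obtain ⟨l', h1, h2⟩ := exists_between (max_lt hl ha)
      refine ⟨l', h2, ?_⟩
      have := max_lt_iff.1 h1
      simp only [Finset.mem_insert]
      rintro c (rfl | hc) hcy
      · exact this.2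
      · exact (h c hc hcy).trans this.1
    · refine ⟨l, hl, ?_⟩
      simp only [Finset.mem_insert]
      rintro c (rfl | hc) hcy
      · exact absurd hcy ha
      · exact h c hc hcy

theorem exists_right [DenselyOrdered M] [NoMaxOrder M] (C : Finset M) (y : M) :
    ∃ r, y < r ∧ ∀ c ∈ C, y < c → r < c := by
  classical
  induction C using Finset.induction_on with
  | empty => obtain ⟨l, hl⟩ := exists_gt y; exact ⟨l, hl, by simp⟩
  | insert a C _ ih =>
    obtain ⟨l, hl, h⟩ := ih
    by_cases ha : y < a
    · obtain ⟨l', h1, h2⟩ := exists_between (lt_min hl ha)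
      refine ⟨l', h1, ?_⟩
      have := lt_min_iff.1 h2
      simp only [Finset.mem_insert]
      rintro c (rfl | hc) hcy
      · exact this.2
      · exact this.1.trans (h c hc hcy)
    · refine ⟨l, hl, ?_⟩
      simp only [Finset.mem_insert]
      rintro c (rfl | hc) hcy
      · exact absurd hcy ha
      · exact h c hc hcy

theorem fr_subset [DenselyOrdered M] [NoMinOrder M] [NoMaxOrder M] {s : M → Prop} {C : Finset M}
    (h : Crit s C) {y : M} (hy : Fr s y) : y ∈ C := by
  by_contra hyC
  obtain ⟨l, hl, hl'⟩ := exists_left C y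
  obtain ⟨r, hr, hr'⟩ := exists_right C y
  obtain ⟨t, ⟨h1, h2⟩, h3⟩ := hy l hl r hr
  apply h3
  rcases le_total t y with hty | hty
  · apply h t y hty
    rintro c hc ⟨h4, h5⟩
    rcases h5.lt_or_eq with h6 | rfl
    · exact absurd (hl' c hc h6) (by grind)
    · exact hyC hc
  · refine (h y t hty ?_).symm
    rintro c hc ⟨h4, h5⟩
    rcases h4.lt_or_eq with h6 | rfl
    · exact absurd (hr' c hc h6) (by grind)
    · exact hyC hc

theorem const_of_no_fr [DenselyOrdered M] {s : M → Prop} {C : Finset M}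
    (h : Crit s C) {y z : M} (hyz : y ≤ z) (hno : ∀ t, y ≤ t → t ≤ z → ¬ Fr s t) :
    s y ↔ s z := by
  classical
  obtain ⟨n, hn⟩ : ∃ n, (C.filter fun c => y ≤ c ∧ c ≤ z).card ≤ n := ⟨_, le_rfl⟩
  induction n generalizing y z with
  | zero =>
    apply h y z hyz
    intro c hc hc'
    have : c ∈ (C.filter fun c => y ≤ c ∧ c ≤ z) := by simp [hc, hc']
    have := Finset.card_pos.2 ⟨c, this⟩
    omega
  | succ n ih =>
    by_cases hex : ∃ c ∈ C, y ≤ c ∧ c ≤ z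
    · obtain ⟨c, hc, hyc, hcz⟩ := hex
      have hcm : c ∈ (C.filter fun c => y ≤ c ∧ c ≤ z) := by simp [hc, hyc, hcz]
      have hf := hno c hyc hcz
      simp only [Fr, not_forall] at hf
      obtain ⟨l, hl, r, hr, hlr⟩ := hf
      have hlr' : ∀ t, l < t → t < r → (s t ↔ s c) := by
        intro t h1 h2
        by_contra h3
        exact hlr ⟨t, ⟨h1, h2⟩, h3⟩
      have hsm : ∀ y' z', y ≤ y' → z' ≤ z → ¬ (y' ≤ c ∧ c ≤ z') →
          (C.filter fun c => y' ≤ c ∧ c ≤ z').card ≤ n := by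
        intro y' z' h1 h2 h3
        have : (C.filter fun c => y' ≤ c ∧ c ≤ z') ⊂ (C.filter fun c => y ≤ c ∧ c ≤ z) := by
          rw [Finset.ssubset_iff_of_subset]
          · exact ⟨c, hcm, by simpa [hc] using h3⟩
          · intro d; simp only [Finset.mem_filter]; grind
        have := Finset.card_lt_card this
        omega
      have e1 : s y ↔ s c := by
        rcases hyc.lt_or_eq with h1 | rfl
        · obtain ⟨t, ht1, ht2⟩ := exists_between (max_lt hl h1)
          have := max_lt_iff.1 ht1
          rw [ih this.2.le (fun u hu1 hu2 => hno u hu1 (by grind)) (hsm y t le_rfl (by grind) (by grind))]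
          exact hlr' t this.1 (by grind)
        · rfl
      have e2 : s c ↔ s z := by
        rcases hcz.lt_or_eq with h1 | rfl
        · obtain ⟨t, ht1, ht2⟩ := exists_between (lt_min hr h1)
          have := lt_min_iff.1 ht2
          rw [← ih this.2.le (fun u hu1 hu2 => hno u (by grind) hu2) (hsm t z (by grind) le_rfl (by grind))]
          exact (hlr' t (by grind) this.1).symm
        · rfl
      exact e1.trans e2
    · push Not at hex
      apply h y z hyz
      rintro c hc ⟨h1, h2⟩
      exact absurd h2 (not_le.2 (hex c hc h1))

theorem Lv.mono {F : M → Prop} {n : ℕ} {y z : M} (h : Lv F n y) (hyz : y ≤ z) : Lv F n z := by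
  cases n with
  | zero => trivial
  | succ n =>
    obtain ⟨t, ⟨h1, h2⟩, h3⟩ := h
    exact ⟨t, ⟨h1.trans_le hyz, h2⟩, h3⟩

theorem Lv.card {F : M → Prop} {C : Finset M} (hC : ∀ y, F y → y ∈ C) {n : ℕ} {y : M}
    (h : Lv F n y) : n ≤ (C.filter fun c => c < y).card := by
  classical
  induction n generalizing y with
  | zero => simp
  | succ n ih =>
    obtain ⟨t, ⟨h1, h2⟩, h3⟩ := h
    have := ih h3
    have h4 : (C.filter fun c => c < t) ⊂ (C.filter fun c => c < y) := by
      rw [Finset.ssubset_iff_of_subset]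
      · exact ⟨t, by simp [h1, hC t h2], by simp⟩
      · intro d; simp only [Finset.mem_filter]; grind
    have := Finset.card_lt_card h4
    omega

theorem exists_rk {F : M → Prop} {C : Finset M} (hC : ∀ y, F y → y ∈ C) (y : M) :
    ∃ n, Rk F n y := by
  by_contra hcon
  have : ∀ n, Lv F n y := by
    intro n
    induction n with
    | zero => trivial
    | succ n ih => by_contra h; exact hcon ⟨n, ih, h⟩
  have := (this ((C.filter fun c => c < y).card + 1)).card hC
  omega

theorem Rk.no {F : M → Prop} {n : ℕ} {y z t : M} (hy : Rk F n y) (hz : Rk F n z)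
    (h1 : y ≤ t) (h2 : t < z) : ¬ F t :=
  fun ht => hz.2 ⟨t, ⟨h2, ht⟩, hy.1.mono h1⟩

theorem Rk.eq {F : M → Prop} {n : ℕ} {y z : M} (hy : Rk F n y) (hz : Rk F n z)
    (h1 : F y) (h2 : F z) : y = z := by
  rcases lt_trichotomy y z with h | h | h
  · exact absurd h1 (hy.no hz le_rfl h)
  · exact h
  · exact absurd h2 (hz.no hy le_rfl h)

end aux

section dfn

variable {L : FirstOrder.Language.{u, u}} {M : Type u} [L.Structure M]

variable (L) in
def Df {γ : Type} (p : (γ → M) → Prop) : Prop := (Set.univ : Set M).Definable L {v | p v}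

variable {γ δ : Type}

theorem Df.and {p q : (γ → M) → Prop} (hp : Df L p) (hq : Df L q) : Df L fun v => p v ∧ q v :=
  Set.Definable.inter hp hq

theorem Df.not {p : (γ → M) → Prop} (hp : Df L p) : Df L fun v => ¬ p v :=
  Set.Definable.compl hp

theorem Df.imp {p q : (γ → M) → Prop} (hp : Df L p) (hq : Df L q) : Df L fun v => p v → q v := by
  have := (hp.and hq.not).not
  simpa only [not_and, not_not] using this

theorem Df.iff {p q : (γ → M) → Prop} (hp : Df L p) (hq : Df L q) : Df L fun v => (p v ↔ q v) := by
  have := (hp.imp hq).and (hq.imp hp)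
  simpa only [iff_def] using this

theorem Df.comp {p : (γ → M) → Prop} (hp : Df L p) (f : γ → δ) :
    Df L fun w : δ → M => p (fun i => w (f i)) :=
  Set.Definable.preimage_comp f hp

theorem Df.ex [Finite γ] [Finite δ] {p : (γ → M) → (δ → M) → Prop}
    (hp : Df L fun w : γ ⊕ δ → M => p (fun i => w (Sum.inl i)) (fun i => w (Sum.inr i))) :
    Df L fun v => ∃ x, p v x := by
  have := Set.Definable.image_comp (f := (Sum.inl : γ → γ ⊕ δ)) hp
  unfold Df
  convert this using 1
  ext v
  constructor
  · rintro ⟨x, hx⟩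
    exact ⟨Sum.elim v x, hx, rfl⟩
  · rintro ⟨w, hw, rfl⟩
    exact ⟨_, hw⟩

theorem Df.ex1 [Finite γ] {p : (γ → M) → M → Prop}
    (hp : Df L fun w : Option γ → M => p (fun i => w (some i)) (w none)) :
    Df L fun v => ∃ x, p v x := by
  have := Df.ex (L := L) (γ := γ) (δ := Unit) (p := fun v x => p v (x ()))
    (hp.comp fun o => o.elim (Sum.inr ()) Sum.inl)
  convert this using 2 with v
  exact ⟨fun ⟨x, h⟩ => ⟨fun _ => x, h⟩, fun ⟨x, h⟩ => ⟨_, h⟩⟩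

theorem Df.all1 [Finite γ] {p : (γ → M) → M → Prop}
    (hp : Df L fun w : Option γ → M => p (fun i => w (some i)) (w none)) :
    Df L fun v => ∀ x, p v x := by
  have := (Df.ex1 (p := fun v x => ¬ p v x) hp.not).not
  simpa only [not_exists, not_not] using this

variable (L) in
def Df2 (q : (γ → M) → M → Prop) : Prop :=
  Df L fun w : Option γ → M => q (fun i => w (some i)) (w none)

theorem Df2.fiber [Finite γ] {q : (γ → M) → M → Prop} (hq : Df2 L q) (v : γ → M) :
    (Set.univ : Set M).Definable₁ L {y | q v y} := by
  obtain ⟨ψ, hψ⟩ := hq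
  refine ⟨ψ.subst (fun o => o.elim (Term.var 0)
    (fun i => (L.con (⟨v i, trivial⟩ : (Set.univ : Set M))).term)), ?_⟩
  ext y
  have := Set.ext_iff.1 hψ (fun o => o.elim (y 0) v)
  simp only [Set.mem_ofPred_eq, Option.elim] at this ⊢
  rw [show q v (y 0) ↔ _ from this, Formula.Realize, Formula.Realize, BoundedFormula.realize_subst] 
  congr! 1
  ext o
  cases o <;> simp

variable [LinearOrder M] 

theorem Df.lt (hM : IsOMinimal L M) (i j : γ) : Df L fun v : γ → M => v i < v j := by
  have h : Df L fun v : Fin 2 → M => v 0 < v 1 := hM.definable_lt.mono (Set.empty_subset _)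
  exact h.comp ![i, j]

theorem Df2.fr [Finite γ] (hM : IsOMinimal L M) {q : (γ → M) → M → Prop} (hq : Df2 L q) :
    Df2 L fun v y => Fr (q v) y := by
  unfold Df2 Fr
  refine Df.all1 (Df.imp (Df.lt hM none (some none)) (Df.all1 (Df.imp
    (Df.lt hM (some (some none)) none) (Df.ex1 (Df.and (Df.and (Df.lt hM (some (some none)) none)
      (Df.lt hM none (some none))) (Df.not (Df.iff ?_ ?_)))))))
  · exact hq.comp fun o => o.elim none fun i => some (some (some (some i)))
  · exact hq.comp fun o => o.elim (some (some (some none))) fun i => some (some (some (some i)))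

theorem Df2.lv [Finite γ] (hM : IsOMinimal L M) {q : (γ → M) → M → Prop} (hq : Df2 L q) (n : ℕ) :
    Df2 L fun v y => Lv (q v) n y := by
  induction n with
  | zero =>
    have : Df L fun _ : Option γ → M => True := by
      exact Set.definable_univ
    exact this
  | succ n ih =>
    refine Df.ex1 (Df.and (Df.and (Df.lt hM none (some none)) ?_) ?_)
    · exact hq.comp fun o => o.elim none fun i => some (some i)
    · exact Df.comp ih fun o => o.elim none fun i => some (some i)

theorem Df2.rk [Finite γ] (hM : IsOMinimal L M) {q : (γ → M) → M → Prop} (hq : Df2 L q) (n : ℕ) :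
    Df2 L fun v y => Rk (q v) n y :=
  Df.and (hq.lv hM n) (Df.not (hq.lv hM (n + 1)))

theorem Df2.crit [Finite γ] (hM : IsOMinimal L M) {q : (γ → M) → M → Prop} (hq : Df2 L q)
    (v : γ → M) : ∃ C : Finset M, Crit (q v) C :=
  exists_crit _ (hM.tame _ (hq.fiber v))

end dfn

section main

variable {L : FirstOrder.Language.{u, u}} {M : Type u} [L.Structure M]

def Tr {α β : Type} (A : Set (α → M)) (p : (α → M) → (β → M) → Prop) : Set (Set (α → M)) :=
  {s | ∃ b, s = {a ∈ A | p a b}}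

theorem mk_iUnion_nat_le {X : Type u} (f : ℕ → Set X) (κ : Cardinal.{u}) (hκ : ℵ₀ ≤ κ)
    (h : ∀ i, #(f i) ≤ κ) : #(⋃ i, f i : Set X) ≤ κ := by
  have h1 := mk_iUnion_le_lift f
  rw [Cardinal.lift_uzero] at h1
  refine h1.trans ?_
  simp only [Cardinal.lift_uzero, Cardinal.mk_nat, Cardinal.lift_aleph0]
  exact (mul_le_mul' hκ (ciSup_le' h)).trans (Cardinal.mul_eq_self hκ).le

variable (L M) in
def Goal (β : Type) [LinearOrder M] : Prop :=
  ∀ (α : Type) [Finite α] (A : Set (α → M)), Df L (fun x => x ∈ A) → A.Infinite →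
    ∀ p : (α → M) → (β → M) → Prop,
      Df L (fun w : α ⊕ β → M => p (fun i => w (Sum.inl i)) (fun i => w (Sum.inr i))) →
      #(Tr A p) ≤ #A

variable [LinearOrder M]

theorem goal_option (hM : IsOMinimal L M) {β : Type} [Finite β] (ih : Goal L M β) :
    Goal L M (Option β) := by
  intro α _ A hA hinf p hp
  have := hM.denselyOrdered
  have := hM.noMinOrder
  have := hM.noMaxOrder
  have hκ : ℵ₀ ≤ #A := Cardinal.infinite_iff.1 hinf.to_subtype
  set P : (α ⊕ β → M) → M → Prop := fun v y =>
    p (fun i => v (Sum.inl i)) (fun o => o.elim y fun j => v (Sum.inr j)) with hP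
  have hPd : Df2 L P := by
    have := hp.comp (δ := Option (α ⊕ β))
      (Sum.elim (fun i => some (Sum.inl i)) fun o => o.elim none fun j => some (Sum.inr j))
    unfold Df2
    convert this using 2 with w
    simp only [hP]
    congr! 1
    ext o
    cases o <;> rfl
  set F : (α ⊕ β → M) → M → Prop := fun v y => Fr (P v) y with hF
  have hFd : Df2 L F := hPd.fr hM
  set E : (β → M) → M → Prop := fun b y => ∃ x : α → M, x ∈ A ∧ F (Sum.elim x b) y with hE
  have hEd : Df2 L E := by
    refine Df.ex (Df.and (hA.comp Sum.inr) ?_)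
    have := Df.comp hFd (δ := Option β ⊕ α) (fun o => o.elim (Sum.inl none)
      (Sum.elim Sum.inr fun j => Sum.inl (some j)))
    convert this using 2 with w
    congr! 1
  set G : (β → M) → M → Prop := fun b y => Fr (E b) y with hG
  have hGd : Df2 L G := hEd.fr hM
  let χ : ℕ → (α ⊕ α → M) → (β → M) → Prop := fun n x b =>
    ∃ y, (F (Sum.elim (fun i => x (Sum.inl i)) b) y ∧
      Rk (F (Sum.elim (fun i => x (Sum.inl i)) b)) n y) ∧
      P (Sum.elim (fun i => x (Sum.inr i)) b) y
  let ψ : ℕ → (α → M) → (β → M) → Prop := fun n x b =>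
    ∃ y, (G b y ∧ Rk (G b) n y) ∧ P (Sum.elim x b) y
  let θ : ℕ → (α → M) → (β → M) → Prop := fun n x b =>
    ∃ y, ((¬ G b y ∧ ¬ E b y) ∧ Rk (G b) n y) ∧ P (Sum.elim x b) y
  -- substitution of variables
  have hsub : ∀ {q : (α ⊕ β → M) → M → Prop} (_ : Df2 L q) {γ : Type} (f : α → γ) (g : β → γ),
      Df2 L fun v : γ → M => q (Sum.elim (fun i => v (f i)) fun j => v (g j)) := by
    intro q hq γ f g
    have := Df.comp hq (δ := Option γ) (fun o => o.elim none
      (Sum.elim (fun i => some (f i)) fun j => some (g j)))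
    unfold Df2
    convert this using 2 with w
    refine iff_of_eq (congrArg (fun z => q z (w none)) ?_)
    funext o
    cases o <;> rfl
  have hsub' : ∀ {q : (β → M) → M → Prop} (_ : Df2 L q),
      Df2 L fun v : α ⊕ β → M => q (fun j => v (Sum.inr j)) := by
    intro q hq
    exact Df.comp hq (δ := Option (α ⊕ β)) (fun o => o.elim none fun j => some (Sum.inr j))
  let B : Set (α ⊕ α → M) := {x | (fun i => x (Sum.inl i)) ∈ A ∧ (fun i => x (Sum.inr i)) ∈ A}
  have hB : Df L (fun x => x ∈ B) := Df.and (hA.comp Sum.inl) (hA.comp Sum.inr)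
  have hBA : #B = #A := by
    rw [← Cardinal.mul_eq_self hκ, Cardinal.mul_def]
    refine Cardinal.mk_congr ⟨fun x => (⟨_, x.2.1⟩, ⟨_, x.2.2⟩),
      fun x => ⟨Sum.elim x.1.1 x.2.1, x.1.2, x.2.2⟩, ?_, ?_⟩
    · rintro ⟨x, hx⟩
      apply Subtype.ext
      ext o
      cases o <;> rfl
    · rintro ⟨x, y⟩
      rfl
  have hBinf : B.Infinite := by
    rw [← Set.infinite_coe_iff, Cardinal.infinite_iff, hBA]; exact hκ
  have hχ : ∀ n, #(Tr B (χ n)) ≤ #A := by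
    intro n
    rw [← hBA]
    refine ih _ B hB hBinf (χ n) ?_
    exact Df.ex1 (Df.and (Df.and (hsub hFd (fun i => Sum.inl (Sum.inl i)) Sum.inr)
      (hsub (hFd.rk hM n) (fun i => Sum.inl (Sum.inl i)) Sum.inr))
      (hsub hPd (fun i => Sum.inl (Sum.inr i)) Sum.inr))
  have hψ : ∀ n, #(Tr A (ψ n)) ≤ #A := by
    intro n
    refine ih _ A hA hinf (ψ n) ?_
    exact Df.ex1 (Df.and (Df.and (hsub' hGd) (hsub' (hGd.rk hM n))) (hsub hPd Sum.inl Sum.inr))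
  have hθ : ∀ n, #(Tr A (θ n)) ≤ #A := by
    intro n
    refine ih _ A hA hinf (θ n) ?_
    exact Df.ex1 (Df.and (Df.and (Df.and (Df.not (hsub' hGd)) (Df.not (hsub' hEd)))
      (hsub' (hGd.rk hM n))) (hsub hPd Sum.inl Sum.inr))
  let sec : A → Set (α ⊕ α → M) → Set (α → M) := fun x0 s => {x | Sum.elim x0.1 x ∈ s}
  have hcover : Tr A p ⊆ (⋃ n : ℕ, ⋃ x0 : A, sec x0 '' Tr B (χ n)) ∪
      ((⋃ n : ℕ, Tr A (ψ n)) ∪ ⋃ n : ℕ, Tr A (θ n)) := by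
    rintro s ⟨b', rfl⟩
    obtain ⟨b, hb⟩ : ∃ b : β → M, b = fun j => b' (some j) := ⟨_, rfl⟩
    obtain ⟨c, hc⟩ : ∃ c : M, c = b' none := ⟨_, rfl⟩
    have hpP : ∀ x, p x b' ↔ P (Sum.elim x b) c := by
      intro x
      simp only [hP]
      congr! 1
      ext o
      cases o <;> simp [hb, hc]
    have hcF : ∀ v, ∃ C : Finset M, ∀ y, F v y → y ∈ C := fun v =>
      (hPd.crit hM v).imp fun C hC y hy => fr_subset hC hy
    have hcG : ∃ C : Finset M, ∀ y, G b y → y ∈ C :=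
      (hEd.crit hM b).imp fun C hC y hy => fr_subset hC hy
    by_cases hEc : E b c
    · obtain ⟨x0, hx0, hFc⟩ := hEc
      left
      obtain ⟨C, hC⟩ := hcF (Sum.elim x0 b)
      obtain ⟨n, hn⟩ := exists_rk hC c
      refine Set.mem_iUnion.2 ⟨n, Set.mem_iUnion.2 ⟨⟨x0, hx0⟩, _, ⟨b, rfl⟩, ?_⟩⟩
      ext x
      constructor
      · rintro ⟨⟨_, hx⟩, y, ⟨h1, h2⟩, h3⟩
        have : y = c := h2.eq hn h1 hFc
        subst this
        exact ⟨hx, (hpP x).2 h3⟩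
      · rintro ⟨hx, h⟩
        exact ⟨⟨hx0, hx⟩, c, ⟨hFc, hn⟩, (hpP x).1 h⟩
    · right
      obtain ⟨C, hC⟩ := hcG
      obtain ⟨n, hn⟩ := exists_rk hC c
      by_cases hGc : G b c
      · left
        refine Set.mem_iUnion.2 ⟨n, b, ?_⟩
        ext x
        constructor
        · rintro ⟨hx, h⟩
          exact ⟨hx, c, ⟨hGc, hn⟩, (hpP x).1 h⟩
        · rintro ⟨hx, y, ⟨h1, h2⟩, h3⟩
          have : y = c := h2.eq hn h1 hGc
          subst this
          exact ⟨hx, (hpP x).2 h3⟩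
      · right
        -- constancy
        have key : ∀ y z, y ≤ z → ¬ G b y → ¬ G b z → ¬ E b y → Rk (G b) n y → Rk (G b) n z →
            ∀ x ∈ A, (P (Sum.elim x b) y ↔ P (Sum.elim x b) z) := by
          intro y z hyz h1 h2 h3 h4 h5 x hx
          have hnoG : ∀ t, y ≤ t → t ≤ z → ¬ G b t := by
            intro t ht1 ht2
            rcases ht2.lt_or_eq with h | rfl
            · exact h4.no h5 ht1 h
            · exact h2
          have hnoE : ∀ t, y ≤ t → t ≤ z → ¬ E b t := by
            intro t ht1 ht2 ht
            obtain ⟨C', hC'⟩ := hEd.crit hM b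
            exact h3 ((const_of_no_fr hC' ht1
              (fun r hr1 hr2 => hnoG r hr1 (hr2.trans ht2))).2 ht)
          obtain ⟨C', hC'⟩ := hPd.crit hM (Sum.elim x b)
          exact const_of_no_fr hC' hyz (fun t ht1 ht2 ht => hnoE t ht1 ht2 ⟨x, hx, ht⟩)
        refine Set.mem_iUnion.2 ⟨n, b, ?_⟩
        ext x
        constructor
        · rintro ⟨hx, h⟩
          exact ⟨hx, c, ⟨⟨hGc, hEc⟩, hn⟩, (hpP x).1 h⟩
        · rintro ⟨hx, y, ⟨⟨h1, h2⟩, h3⟩, h4⟩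
          refine ⟨hx, (hpP x).2 ?_⟩
          rcases le_total y c with h | h
          · exact (key y c h h1 hGc h2 h3 hn x hx).1 h4
          · exact (key c y h hGc h1 hEc hn h3 x hx).2 h4
  refine (Cardinal.mk_le_mk_of_subset hcover).trans ((Cardinal.mk_union_le _ _).trans ?_)
  refine Cardinal.add_le_of_le hκ ?_ ((Cardinal.mk_union_le _ _).trans (Cardinal.add_le_of_le hκ
    (mk_iUnion_nat_le _ _ hκ hψ) (mk_iUnion_nat_le _ _ hκ hθ)))
  refine mk_iUnion_nat_le _ _ hκ fun n => ?_
  refine (Cardinal.mk_iUnion_le _).trans ?_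
  refine (mul_le_mul' le_rfl (ciSup_le' fun x0 => ?_)).trans (Cardinal.mul_eq_self hκ).le
  exact Cardinal.mk_image_le.trans (hχ n)

theorem goal_all (hM : IsOMinimal L M) (β : Type) [Finite β] : Goal L M β := by
  refine Finite.induction_empty_option (P := fun β => Goal L M β) ?_ ?_ ?_ β
  · intro β β' e h α _ A hA hinf p hp
    refine le_of_eq_of_le ?_ (h α A hA hinf (fun x b => p x fun j => b (e.symm j)) ?_)
    · congr 2
      ext s
      constructor
      · rintro ⟨b, rfl⟩
        exact ⟨fun j => b (e j), by simp⟩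
      · rintro ⟨b, rfl⟩
        exact ⟨_, rfl⟩
    · exact hp.comp (Sum.elim Sum.inl fun j => Sum.inr (e.symm j))
  · intro α _ A hA hinf p hp
    have hκ : ℵ₀ ≤ #A := Cardinal.infinite_iff.1 hinf.to_subtype
    refine le_trans ?_ (Cardinal.one_lt_aleph0.le.trans hκ)
    rw [Cardinal.le_one_iff_subsingleton]
    constructor
    rintro ⟨s, b, rfl⟩ ⟨t, b', rfl⟩
    rw [Subsingleton.elim b b']
  · intro β _ h
    exact goal_option hM h

end main

/-- Main result: in an o-minimal structure `M`, for any formula `φ(x;y)` and any infinite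
definable set `A ⊆ M^|x|`, the family `{φ(A;b) : b ∈ M^|y|}` has cardinality at most `|A|`. -/
theorem card_definable_family_le {L : FirstOrder.Language.{u, u}} {M : Type u} [L.Structure M]
    [LinearOrder M] (hM : IsOMinimal L M) {m k : ℕ} (φ : L.Formula (Fin m ⊕ Fin k))
    (A : Set (Fin m → M)) (hAdef : (Set.univ : Set M).Definable L A) (hAinf : A.Infinite) :
    #{s : Set (Fin m → M) | ∃ b : Fin k → M,
        s = {a ∈ A | φ.Realize (Sum.elim a b)}} ≤ #A := by
  refine goal_all hM (Fin k) (Fin m) A hAdef hAinf (fun a b => φ.Realize (Sum.elim a b)) ?_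
  have h : (∅ : Set M).Definable L {w : Fin m ⊕ Fin k → M | φ.Realize w} :=
    Set.empty_definable_iff.2 ⟨φ, rfl⟩
  have h' : Df L fun w : Fin m ⊕ Fin k → M => φ.Realize w := h.mono (Set.empty_subset _)
  convert h' using 2 with w
  congr! 1
  ext o
  cases o <;> rfl
end

section
/- Let M be an o-minimal structure in a language L and let A ⊆ M be a definable set with |A| > 1. Then the set S^def(A) of definable types over A has cardinality at most |A|^{|L| + ℵ₀}. -/
open FirstOrder FirstOrder.Language Set Cardinal Filter Topology

universe u

/-- Given a formula `φ(x;y)` of `L` (with `x` an `m`-tuple and `y` an `n`-tuple) and a tuple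
`b` of parameters from `A`, the sentence `φ(x;b)` of the language `L[[A]][[Fin m]]` obtained
by substituting the constants `b` for the variables `y` (complete types over `A` in variables
`x` are maximal consistent sets of such sentences). -/
noncomputable def paramSentenceOver {L : FirstOrder.Language} {M : Type*} [L.Structure M]
    (A : Set M) {m n : ℕ} (φ : L.Formula (Fin m ⊕ Fin n)) (b : Fin n → A) :
    (L[[↥A]])[[Fin m]].Sentence :=
  Formula.equivSentence
    (((L.lhomWithConstants ↥A).onFormula φ).subst
      (Sum.elim Term.var fun j => (L.con (b j)).term))

/-- A complete type `p(x)` over `A ⊆ M` (i.e. a complete type of the theory of `M` with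
constants for the elements of `A`) is definable if, for every formula `φ(x;y)`, there are a
formula `ψ(y;z)` and a tuple `c ∈ M^|z|` such that
`{b ∈ A^|y| : φ(x;b) ∈ p} = ψ(A^|y|; c)`. -/
def IsDefinableTypeOver {L : FirstOrder.Language} {M : Type*} [L.Structure M] (A : Set M)
    {m : ℕ} (p : ((L[[↥A]]).completeTheory M).CompleteType (Fin m)) : Prop :=
  ∀ (n : ℕ) (φ : L.Formula (Fin m ⊕ Fin n)),
    ∃ (k : ℕ) (ψ : L.Formula (Fin n ⊕ Fin k)) (c : Fin k → M),
      {b : Fin n → A | paramSentenceOver A φ b ∈ p} =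
        {b : Fin n → A | ψ.Realize (Sum.elim (fun i => (b i : M)) c)}


set_option linter.unusedSectionVars false

namespace OMinCount

section order
variable {M : Type*} [LinearOrder M]

/-- Boundary points of a set. -/
def Bd (S : M → Prop) (b : M) : Prop :=
  ∀ u v : M, u < b → b < v → (∃ s, u < s ∧ s < v ∧ S s) ∧ (∃ t, u < t ∧ t < v ∧ ¬ S t)

/-- There are at least `j` points of `B` below `x`. -/
def cnt (B : M → Prop) : ℕ → M → Prop
  | 0, _ => True
  | j + 1, x => ∃ w, B w ∧ w < x ∧ cnt B j w

def Part (S : M → Prop) (P : Finset M) : Prop :=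
  ∀ x y, x < y → (∀ p ∈ P, ¬ (x ≤ p ∧ p ≤ y)) → (S x ↔ S y)

lemma Part.ofFin {s : Set M} (h : IsFinUnionPointsIntervals s) : ∃ P, Part (· ∈ s) P := by
  classical
  obtain ⟨P, I, rfl⟩ := h
  let f : WithBot M → Finset M := fun a => a.recBotCoe ∅ (fun a => {a})
  let g : WithTop M → Finset M := fun a => a.recTopCoe ∅ (fun a => {a})
  refine ⟨P ∪ I.biUnion (fun p => f p.1 ∪ g p.2), ?_⟩
  intro x y hxy h
  have hP : ∀ p ∈ P, ¬ (x ≤ p ∧ p ≤ y) := fun p hp => h p (by simp [hp])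
  have hxP : x ∉ P := fun hx => hP x hx ⟨le_rfl, hxy.le⟩
  have hyP : y ∉ P := fun hx => hP y hx ⟨hxy.le, le_rfl⟩
  have key : ∀ p ∈ I, ((p.1 < (x : WithBot M) ∧ (x : WithTop M) < p.2) ↔
      (p.1 < (y : WithBot M) ∧ (y : WithTop M) < p.2)) := by
    rintro ⟨a, b⟩ hp
    have ha : ∀ q ∈ f a, ¬ (x ≤ q ∧ q ≤ y) := fun q hq => h q (by
      simp only [Finset.mem_union, Finset.mem_biUnion]
      exact Or.inr ⟨_, hp, Or.inl hq⟩)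
    have hb : ∀ q ∈ g b, ¬ (x ≤ q ∧ q ≤ y) := fun q hq => h q (by
      simp only [Finset.mem_union, Finset.mem_biUnion]
      exact Or.inr ⟨_, hp, Or.inr hq⟩)
    have h1 : a < (x : WithBot M) ↔ a < (y : WithBot M) := by
      induction a using WithBot.recBotCoe with
      | bot => simp
      | coe a =>
        have := ha a (by simp [f])
        simp only [WithBot.coe_lt_coe]
        grind
    have h2 : (x : WithTop M) < b ↔ (y : WithTop M) < b := by
      induction b using WithTop.recTopCoe with
      | top => simp
      | coe a =>
        have := hb a (by simp [g])
        simp only [WithTop.coe_lt_coe]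
        grind
    simp only [h1, h2]
  simp only [Set.mem_union, Finset.mem_coe, hxP, hyP, Set.mem_iUnion, Set.mem_ofPred_eq, false_or,
    exists_prop]
  exact exists_congr fun p => and_congr_right (key p)

variable [DenselyOrdered M] [NoMinOrder M] [NoMaxOrder M]

lemma Part.erase [DecidableEq M] {S : M → Prop} {P : Finset M} (h : Part S P) {p : M}
    (hp : ¬ Bd S p) : Part S (P.erase p) := by
  intro x y hxy hE
  by_cases hpxy : x ≤ p ∧ p ≤ y
  swap
  · refine h x y hxy fun q hq => ?_
    by_cases hqp : q = p
    · subst hqp; exact hpxy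
    · exact hE q (by simp [hq, hqp])
  have hE' : ∀ q ∈ P, x ≤ q → q ≤ y → q = p := fun q hq h1 h2 => by
    by_contra hne
    exact hE q (by simp [hq, hne]) ⟨h1, h2⟩
  have : ∃ u v : M, u < p ∧ p < v ∧ ∀ s t, u < s → s < v → u < t → t < v → (S s ↔ S t) := by
    by_contra hcon
    apply hp
    intro u v hu hv
    by_contra hc
    apply hcon
    refine ⟨u, v, hu, hv, fun s t a b c d => ?_⟩
    constructor
    · intro hs; by_contra ht; exact hc ⟨⟨s, a, b, hs⟩, ⟨t, c, d, ht⟩⟩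
    · intro hs; by_contra ht; exact hc ⟨⟨t, c, d, hs⟩, ⟨s, a, b, ht⟩⟩
  obtain ⟨u, v, hu, hv, hc⟩ := this
  have left : S x ↔ S p := by
    rcases hpxy.1.eq_or_lt with rfl | hlt
    · rfl
    obtain ⟨w, hw1, hw2⟩ := exists_between (max_lt hu hlt)
    have hw3 := max_lt_iff.1 hw1
    rw [← hc w p hw3.1 (hw2.trans hv) hu hv]
    refine h x w hw3.2 fun q hq ⟨a, b⟩ => ?_
    have := hE' q hq a (by grind)
    grind
  have right : S p ↔ S y := by
    rcases hpxy.2.eq_or_lt with rfl | hlt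
    · rfl
    obtain ⟨w, hw1, hw2⟩ := exists_between (lt_min hv hlt)
    have hw3 := lt_min_iff.1 hw2
    rw [hc p w hu hv (hu.trans hw1) hw3.1]
    refine h w y hw3.2 fun q hq ⟨a, b⟩ => ?_
    have := hE' q hq (by grind) b
    grind
  exact left.trans right

lemma exists_nbhd (P : Finset M) (b : M) (hb : b ∉ P) :
    ∃ u v, u < b ∧ b < v ∧ ∀ p ∈ P, ¬ (u < p ∧ p < v) := by
  classical
  induction P using Finset.induction_on with
  | empty =>
    obtain ⟨u, hu⟩ := exists_lt b
    obtain ⟨v, hv⟩ := exists_gt b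
    exact ⟨u, v, hu, hv, by simp⟩
  | insert a P _ ih =>
    obtain ⟨u, v, hu, hv, h⟩ := ih (by grind)
    have : a ≠ b := by grind
    rcases this.lt_or_gt with h1 | h1
    · exact ⟨max u a, v, by grind, hv, by grind⟩
    · exact ⟨u, min v a, hu, by grind, by grind⟩

/-- The main combinatorial fact. -/
lemma bd_facts {s : Set M} (h : IsFinUnionPointsIntervals s) :
    {b | Bd (· ∈ s) b}.Finite ∧ ∀ x y, x < y → ¬ (x ∈ s ↔ y ∈ s) →
      ∃ b, Bd (· ∈ s) b ∧ x ≤ b ∧ b ≤ y := by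
  classical
  obtain ⟨P, hP⟩ := Part.ofFin h
  constructor
  · refine P.finite_toSet.subset fun b hb => ?_
    by_contra hbP
    obtain ⟨u, v, hu, hv, hn⟩ := exists_nbhd P b hbP
    obtain ⟨⟨x, hx1, hx2, hx⟩, ⟨y, hy1, hy2, hy⟩⟩ := hb u v hu hv
    rcases lt_trichotomy x y with hl | hl | hl
    · exact hy ((hP x y hl (by grind)).1 hx)
    · subst hl; exact hy hx
    · exact hy ((hP y x hl (by grind)).2 hx)
  · obtain ⟨Q, hQ⟩ : ∃ Q, Part (· ∈ s) Q ∧ ∀ q ∈ Q, Bd (· ∈ s) q := by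
      clear h
      induction hn : P.card using Nat.strong_induction_on generalizing P with
      | _ n ih =>
        by_cases hall : ∀ q ∈ P, Bd (· ∈ s) q
        · exact ⟨P, hP, hall⟩
        push Not at hall
        obtain ⟨q, hq, hb⟩ := hall
        exact ih _ (by rw [← hn]; exact Finset.card_erase_lt_of_mem hq) _ (hP.erase hb) rfl
    intro x y hxy hne
    by_contra hcon
    exact hne (hQ.1 x y hxy fun q hq hq' => hcon ⟨q, hQ.2 q hq, hq'⟩)

end order

section order2
variable {M : Type*} [LinearOrder M]

lemma cnt_mono {B : M → Prop} {j : ℕ} {x y : M} (h : x ≤ y) (hc : cnt B j x) : cnt B j y := by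
  cases j with
  | zero => trivial
  | succ j =>
    obtain ⟨w, h1, h2, h3⟩ := hc
    exact ⟨w, h1, h2.trans_le h, h3⟩

lemma cnt_anti {B : M → Prop} {j : ℕ} {x : M} (hc : cnt B (j + 1) x) : cnt B j x := by
  induction j generalizing x with
  | zero => trivial
  | succ j ih =>
    obtain ⟨w, h1, h2, h3⟩ := hc
    exact ⟨w, h1, h2, ih h3⟩

lemma cnt_bdd {B : M → Prop} (hB : {b | B b}.Finite) : ∃ N, ∀ x, ¬ cnt B N x := by
  classical
  have : ∀ j x, cnt B j x → ∃ F : Finset M, F.card = j ∧ ∀ b ∈ F, B b ∧ b < x := by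
    intro j
    induction j with
    | zero => intro x _; exact ⟨∅, by simp⟩
    | succ j ih =>
      rintro x ⟨w, h1, h2, h3⟩
      obtain ⟨F, hF, hF'⟩ := ih w h3
      refine ⟨insert w F, ?_, ?_⟩
      · rw [Finset.card_insert_of_notMem, hF]
        intro hw
        exact lt_irrefl _ (hF' w hw).2
      · intro b hb
        rcases Finset.mem_insert.1 hb with rfl | hb
        · exact ⟨h1, h2⟩
        · exact ⟨(hF' b hb).1, (hF' b hb).2.trans h2⟩
  refine ⟨hB.toFinset.card + 1, fun x hx => ?_⟩
  obtain ⟨F, hF, hF'⟩ := this _ x hx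
  have : F ⊆ hB.toFinset := fun b hb => by simpa using (hF' b hb).1
  have := Finset.card_le_card this
  omega

/-- exact count exists -/
lemma cnt_exact {B : M → Prop} (hB : {b | B b}.Finite) (x : M) :
    ∃ j, cnt B j x ∧ ¬ cnt B (j + 1) x := by
  classical
  obtain ⟨N, hN⟩ := cnt_bdd hB
  by_contra hcon
  push Not at hcon
  have : ∀ j, cnt B j x := fun j => by
    induction j with
    | zero => trivial
    | succ j ih => exact hcon j ih
  exact hN x (this N)

lemma cnt_anti' {B : M → Prop} {i j : ℕ} {x : M} (hij : i ≤ j) (hc : cnt B j x) : cnt B i x := by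
  induction hij with
  | refl => exact hc
  | step _ ih => exact ih (cnt_anti hc)

lemma cnt_strict {B : M → Prop} (hB : {b | B b}.Finite) {x y b : M} (hb : B b) (h1 : x ≤ b)
    (h2 : b < y) : ∃ j, cnt B j y ∧ ¬ cnt B j x := by
  obtain ⟨j, hj, hj'⟩ := cnt_exact hB x
  exact ⟨j + 1, ⟨b, hb, h2, cnt_mono h1 hj⟩, hj'⟩

/-- same counts and same membership in boundary imply same membership -/
lemma mem_iff_of_cnt {S B : M → Prop} (hB : {b | B b}.Finite)
    (hS : ∀ x y, x < y → ¬ (S x ↔ S y) → ∃ b, B b ∧ x ≤ b ∧ b ≤ y) {x y : M}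
    (hc : ∀ j, cnt B j x ↔ cnt B j y) (hb : B x ↔ B y) : S x ↔ S y := by
  have aux : ∀ x y, (∀ j, cnt B j x ↔ cnt B j y) → (B x ↔ B y) → x < y → (S x ↔ S y) := by
    intro x y hc hb hxy
    by_contra hne
    obtain ⟨b, hb1, hb2, hb3⟩ := hS x y hxy hne
    rcases hb3.eq_or_lt with rfl | hlt
    · obtain ⟨j, hj, hj'⟩ := cnt_strict hB (hb.2 hb1) le_rfl hxy
      exact hj' ((hc j).2 hj)
    · obtain ⟨j, hj, hj'⟩ := cnt_strict hB hb1 hb2 hlt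
      exact hj' ((hc j).2 hj)
  rcases lt_trichotomy x y with h | rfl | h
  · exact aux x y hc hb h
  · rfl
  · exact (aux y x (fun j => (hc j).symm) hb.symm h).symm

/-- position transfer -/
lemma lt_transfer {S B S' B' : M → Prop} (hB : {b | B b}.Finite)
    (hS : ∀ x y, x < y → ¬ (S x ↔ S y) → ∃ b, B b ∧ x ≤ b ∧ b ≤ y)
    (hB' : {b | B' b}.Finite)
    (hS' : ∀ x y, x < y → ¬ (S' x ↔ S' y) → ∃ b, B' b ∧ x ≤ b ∧ b ≤ y) {w x w' z : M}
    (hw : ∀ j, cnt B j w ↔ cnt B' j w') (hwb : B w ↔ B' w')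
    (hx : ∀ j, cnt B j x ↔ cnt B' j z) (hxb : B x ↔ B' z)
    (hwx : ¬ (S w ↔ S x)) (hwz : ¬ (S' w' ↔ S' z)) (hlt : w < x) : w' < z := by
  by_contra hcon
  have hne : z ≠ w' := by rintro rfl; exact hwz Iff.rfl
  have hlt' : z < w' := lt_of_le_of_ne (not_lt.1 hcon) hne
  obtain ⟨b, hb1, hb2, hb3⟩ := hS w x hlt hwx
  obtain ⟨b', hb1', hb2', hb3'⟩ := hS' z w' hlt' (fun h => hwz h.symm)
  rcases hb3.eq_or_lt with rfl | h3
  · rcases hb3'.eq_or_lt with rfl | h3'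
    · obtain ⟨j, hj, hj'⟩ := cnt_strict hB (hwb.2 hb1') le_rfl hlt
      exact hj' ((hw j).2 (cnt_mono hlt'.le ((hx j).1 hj)))
    · obtain ⟨j, hj, hj'⟩ := cnt_strict hB' hb1' hb2' h3'
      exact hj' ((hx j).1 (cnt_mono hlt.le ((hw j).2 hj)))
  · obtain ⟨j, hj, hj'⟩ := cnt_strict hB hb1 hb2 h3
    exact hj' ((hw j).2 (cnt_mono hlt'.le ((hx j).1 hj)))

/-- counting through exact level points -/
lemma cnt_succ_iff {B : M → Prop} (hB : {b | B b}.Finite) (j : ℕ) (x : M) :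
    cnt B (j + 1) x ↔ ∃ w, (B w ∧ cnt B j w ∧ ¬ cnt B (j + 1) w) ∧ w < x := by
  constructor
  · rintro ⟨w, h1, h2, h3⟩
    have hf : {b | B b ∧ cnt B j b}.Finite := hB.subset fun b hb => hb.1
    obtain ⟨m, hm, hmin⟩ := hf.exists_minimal ⟨w, h1, h3⟩
    by_cases hwm : w < m
    · exact absurd (hmin ⟨h1, h3⟩ hwm.le) (not_le.2 hwm)
    refine ⟨m, ⟨hm.1, hm.2, ?_⟩, (not_lt.1 hwm).trans_lt h2⟩
    rintro ⟨w', a, b, c⟩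
    exact absurd (hmin ⟨a, c⟩ b.le) (not_le.2 b)
  · rintro ⟨w, ⟨h1, h2, _⟩, h⟩
    exact ⟨w, h1, h, h2⟩

lemma level_unique {B : M → Prop} {j : ℕ} {w w' : M} (h : B w ∧ cnt B j w ∧ ¬ cnt B (j + 1) w)
    (h' : B w' ∧ cnt B j w' ∧ ¬ cnt B (j + 1) w') : w = w' := by
  rcases lt_trichotomy w w' with hl | hl | hl
  · exact absurd ⟨w, h.1, hl, h.2.1⟩ h'.2.2
  · exact hl
  · exact absurd ⟨w', h'.1, hl, h'.2.1⟩ h.2.2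

end order2

section order3
lemma bd_factsP {M : Type*} [LinearOrder M] [DenselyOrdered M] [NoMinOrder M] [NoMaxOrder M]
    {S : M → Prop} (h : IsFinUnionPointsIntervals {y | S y}) :
    {b | Bd S b}.Finite ∧ ∀ x y, x < y → ¬ (S x ↔ S y) → ∃ b, Bd S b ∧ x ≤ b ∧ b ≤ y :=
  bd_facts h
end order3

section defin

variable {L : FirstOrder.Language.{u, u}} {M : Type u} [L.Structure M]

variable (L) in
/-- Definable predicates over `e`. -/
def D (e : Set M) {α : Type} (P : (α → M) → Prop) : Prop := e.Definable L {v | P v}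

variable (L) in
/-- Definable families of predicates. -/
def DF (e : Set M) {α : Type} (Q : (α → M) → M → Prop) : Prop :=
  D L e (fun w : α ⊕ Unit → M => Q (fun i => w (Sum.inl i)) (w (Sum.inr ())))

variable {e : Set M} {α β : Type}

lemma D.and {P Q : (α → M) → Prop} (hP : D L e P) (hQ : D L e Q) :
    D L e (fun v => P v ∧ Q v) := Set.Definable.inter hP hQ

lemma D.not {P : (α → M) → Prop} (hP : D L e P) : D L e (fun v => ¬ P v) :=
  Set.Definable.compl hP

lemma D.imp {P Q : (α → M) → Prop} (hP : D L e P) (hQ : D L e Q) :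
    D L e (fun v => P v → Q v) := by
  have := (hP.and hQ.not).not
  simpa only [not_and, not_not] using this

lemma D.true : D L e (fun _ : α → M => True) := Set.definable_univ

lemma D.subst {P : (α → M) → Prop} (hP : D L e P) (σ : α → β) :
    D L e (fun v : β → M => P (fun i => v (σ i))) := Set.Definable.preimage_comp σ hP

lemma DF.subst {Q : (α → M) → M → Prop} (hQ : DF L e Q) (σ : α → β) (j : β) :
    D L e (fun v : β → M => Q (fun i => v (σ i)) (v j)) :=
  D.subst (β := β) hQ (Sum.elim σ (fun _ => j))

lemma D.ex [Finite β] {P : (α → M) → (β → M) → Prop}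
    (h : D L e (fun w : α ⊕ β → M => P (fun i => w (Sum.inl i)) (fun i => w (Sum.inr i)))) :
    D L e (fun v => ∃ u, P v u) := Set.Definable.exists_of_finite h

lemma D.ex1 {Q : (α → M) → M → Prop} (h : DF L e Q) : D L e (fun v => ∃ x, Q v x) := by
  have := D.ex (P := fun v (u : Unit → M) => Q v (u ())) h
  refine (congrArg (D L e) (funext fun v => propext ?_)).mp this
  exact ⟨fun ⟨u, hu⟩ => ⟨_, hu⟩, fun ⟨x, hx⟩ => ⟨fun _ => x, hx⟩⟩

lemma D.all1 {Q : (α → M) → M → Prop} (h : DF L e Q) : D L e (fun v => ∀ x, Q v x) := by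
  have := (D.ex1 (Q := fun v x => ¬ Q v x) (D.not h)).not
  simpa only [not_exists, not_not] using this

lemma D.forallFin {ι : Type} [Finite ι] {P : ι → (α → M) → Prop} (h : ∀ i, D L e (P i)) :
    D L e (fun v => ∀ i, P i v) := by
  have := Set.definable_iInter_of_finite h
  unfold D
  convert this using 1
  ext v; simp

lemma D.mem {A : Set M} (hA : e.Definable₁ L A) (i : α) : D L e (fun v => v i ∈ A) :=
  D.subst (α := Fin 1) (P := fun v => v 0 ∈ A) hA (fun _ => i)

lemma DF.fiber {Q : (α → M) → M → Prop} (hQ : DF L e Q) (v : α → M) :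
    (Set.univ : Set M).Definable₁ L {y | Q v y} := by
  have h : (Set.univ : Set M).Definable L _ := Set.Definable.mono hQ (Set.subset_univ e)
  rw [Set.definable_iff_exists_formula_sum] at h
  obtain ⟨φ, hφ⟩ := h
  rw [Set.Definable₁, Set.definable_iff_exists_formula_sum]
  refine ⟨φ.relabel (Sum.elim Sum.inl
    (Sum.elim (fun i => Sum.inl ⟨v i, trivial⟩) (fun _ => Sum.inr 0))), ?_⟩
  ext y
  have := Set.ext_iff.1 hφ (Sum.elim v (fun _ => y 0))
  simp only [Set.mem_ofPred_eq, Sum.elim_inl, Sum.elim_inr] at this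
  simp only [Set.mem_ofPred_eq, Formula.realize_relabel]
  rw [this]
  refine iff_of_eq (congrArg _ ?_)
  funext i
  rcases i with i | i | i <;> rfl

variable [LinearOrder M]

lemma D.lt (hlt : e.Definable L {x : Fin 2 → M | x 0 < x 1}) (i j : α) :
    D L e (fun v => v i < v j) :=
  D.subst (α := Fin 2) (P := fun x => x 0 < x 1) hlt ![i, j]

lemma DF.bd (hlt : e.Definable L {x : Fin 2 → M | x 0 < x 1}) {Q : (α → M) → M → Prop}
    (hQ : DF L e Q) : DF L e (fun v => Bd (Q v)) := by
  unfold DF Bd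
  apply D.all1
  apply D.all1
  apply D.imp (D.lt hlt _ _)
  apply D.imp (D.lt hlt _ _)
  apply D.and
  · apply D.ex1
    apply D.and (D.lt hlt _ _)
    apply D.and (D.lt hlt _ _)
    exact hQ.subst (fun i => Sum.inl (Sum.inl (Sum.inl (Sum.inl i)))) _
  · apply D.ex1
    apply D.and (D.lt hlt _ _)
    apply D.and (D.lt hlt _ _)
    apply D.not
    exact hQ.subst (fun i => Sum.inl (Sum.inl (Sum.inl (Sum.inl i)))) _

lemma DF.cnt (hlt : e.Definable L {x : Fin 2 → M | x 0 < x 1}) {Q : (α → M) → M → Prop}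
    (hQ : DF L e Q) (j : ℕ) : DF L e (fun v => OMinCount.cnt (Q v) j) := by
  induction j with
  | zero => exact D.true
  | succ j ih =>
    unfold DF
    simp only [OMinCount.cnt]
    apply D.ex1
    apply D.and
    · exact hQ.subst (fun i => Sum.inl (Sum.inl i)) _
    apply D.and (D.lt hlt _ _)
    exact ih.subst (fun i => Sum.inl (Sum.inl i)) _

/-- combine tuple with parameters from `A` -/
def cb {A : Set M} (c : α → M) (b : β → A) : α ⊕ β → M := Sum.elim c (fun i => (b i : M))

variable (L e) in
/-- same type over `A` -/
def Same (A : Set M) (c d : α → M) : Prop :=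
  ∀ (n : ℕ) (P : (α ⊕ Fin n → M) → Prop), D L e P → ∀ b : Fin n → A, P (cb c b) ↔ P (cb d b)

variable {A : Set M} {c d : α → M}

lemma Same.symm (h : Same L e A c d) : Same L e A d c := fun n P hP b => (h n P hP b).symm

lemma Same.gen [Finite β] (h : Same L e A c d) (P : (α ⊕ β → M) → Prop) (hP : D L e P)
    (b : β → A) : P (cb c b) ↔ P (cb d b) := by
  obtain ⟨n, ⟨f⟩⟩ := Finite.exists_equiv_fin β
  have := h n _ (hP.subst (Sum.map id f)) (b ∘ f.symm)
  have key : ∀ c : α → M, (fun i => cb c (b ∘ f.symm) (Sum.map id f i)) = cb c b := by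
    intro c
    funext i
    rcases i with i | i <;> simp [cb]
  simpa only [key] using this

/-- existential closure over `A` -/
def EA (A : Set M) {n : ℕ} (Q : (α ⊕ Fin n → M) → M → Prop) (v : α → M) (y : M) : Prop :=
  ∃ a : Fin n → M, (∀ i, a i ∈ A) ∧ Q (Sum.elim v a) y

lemma DF.EA (hA : e.Definable₁ L A) {n : ℕ} {Q : (α ⊕ Fin n → M) → M → Prop} (hQ : DF L e Q) :
    DF L e (OMinCount.EA A Q) := by
  unfold DF OMinCount.EA
  apply D.ex
  apply D.and
  · exact D.forallFin fun i => D.mem hA _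
  · have := hQ.subst (β := (α ⊕ Unit) ⊕ Fin n)
      (Sum.elim (fun i => Sum.inl (Sum.inl i)) Sum.inr) (Sum.inl (Sum.inr ()))
    refine (congrArg (D L e) (funext fun w => ?_)).mp this
    refine congrArg (fun v => Q v _) (funext fun i => ?_)
    rcases i with i | i <;> rfl

lemma EA_iff {n : ℕ} {Q : (α ⊕ Fin n → M) → M → Prop} {v : α → M} {y : M} :
    EA A Q v y ↔ ∃ a : Fin n → A, Q (cb v a) y :=
  ⟨fun ⟨a, h, h'⟩ => ⟨fun i => ⟨a i, h i⟩, h'⟩, fun ⟨a, h⟩ => ⟨fun i => a i, fun i => (a i).2, h⟩⟩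

variable (L e A c d) in
structure Good (x z : M) : Prop where
  same : Same L e A c d
  h0 : ∀ Q : (α → M) → M → Prop, DF L e Q → (Q c x ↔ Q d z)
  h1 : ∀ (n : ℕ) (Q : (α ⊕ Fin n → M) → M → Prop), DF L e Q →
    ((∃ a : Fin n → A, Q (cb c a) x) ∨ (∃ a : Fin n → A, Q (cb d a) z)) →
      ∃ a : Fin n → A, Q (cb c a) x ∧ Q (cb d a) z

variable {x z : M}

lemma Good.symm (h : Good L e A c d x z) : Good L e A d c z x :=
  ⟨h.same.symm, fun Q hQ => (h.h0 Q hQ).symm, fun n Q hQ hh => by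
    obtain ⟨a, h1, h2⟩ := h.h1 n Q hQ hh.symm
    exact ⟨a, h2, h1⟩⟩

lemma transfer2 (h : Same L e A c d) {n : ℕ} {R : (α ⊕ Fin n → M) → M → Prop}
    (hR : DF L e R) {T : M → M → Prop} (hT : D L e (fun v : Fin 2 → M => T (v 0) (v 1)))
    (a b : Fin n → A) (hh : ∃ w w', R (cb c a) w ∧ R (cb c b) w' ∧ T w w') :
      ∃ w w', R (cb d a) w ∧ R (cb d b) w' ∧ T w w' := by
  have key := h.gen (β := Fin n ⊕ Fin n) (fun v => ∃ w w',
      R (fun i => v (Sum.elim Sum.inl (fun j => Sum.inr (Sum.inl j)) i)) w ∧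
      R (fun i => v (Sum.elim Sum.inl (fun j => Sum.inr (Sum.inr j)) i)) w' ∧ T w w') (by
    apply D.ex1
    apply D.ex1
    apply D.and
    · exact hR.subst (fun i => Sum.inl (Sum.inl
        (Sum.elim Sum.inl (fun j => Sum.inr (Sum.inl j)) i))) _
    apply D.and
    · exact hR.subst (fun i => Sum.inl (Sum.inl
        (Sum.elim Sum.inl (fun j => Sum.inr (Sum.inr j)) i))) _
    · exact hT.subst ![Sum.inl (Sum.inr ()), Sum.inr ()]) (Sum.elim a b)
  have e1 : ∀ c : α → M, (fun i => cb c (Sum.elim a b)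
      (Sum.elim Sum.inl (fun j => Sum.inr (Sum.inl j)) i)) = cb c a := by
    intro c; funext i; rcases i with i | i <;> rfl
  have e2 : ∀ c : α → M, (fun i => cb c (Sum.elim a b)
      (Sum.elim Sum.inl (fun j => Sum.inr (Sum.inr j)) i)) = cb c b := by
    intro c; funext i; rcases i with i | i <;> rfl
  simp only [e1, e2] at key
  exact key.1 hh

lemma transfer1 (h : Same L e A c d) {n : ℕ} {R : (α ⊕ Fin n → M) → M → Prop}
    (hR : DF L e R) (b : Fin n → A) (hh : ∃ w, R (cb c b) w) : ∃ w, R (cb d b) w :=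
  (h n _ (D.ex1 hR) b).1 hh

lemma transferU (h : Same L e A c d) {n : ℕ} {χ : (α ⊕ Fin n → M) → M → Prop}
    (hχ : DF L e χ) (hu : ∀ v w w', χ v w → χ v w' → w = w') {R : (α ⊕ Fin n → M) → M → Prop}
    (hR : DF L e R) (b : Fin n → A) {w w' : M} (hw : χ (cb c b) w) (hw' : χ (cb d b) w') :
    R (cb c b) w ↔ R (cb d b) w' := by
  have hd : DF L e (fun v y => χ v y ∧ R v y) := D.and hχ hR
  constructor
  · intro hr
    obtain ⟨y, h1, h2⟩ := transfer1 h hd b ⟨w, hw, hr⟩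
    rwa [hu _ _ _ hw' h1]
  · intro hr
    obtain ⟨y, h1, h2⟩ := transfer1 h.symm hd b ⟨w', hw', hr⟩
    rwa [hu _ _ _ hw h1]

lemma K_eq (h : Good L e A c d x z) {n : ℕ} {χ : (α ⊕ Fin n → M) → M → Prop}
    (hχ : DF L e χ) (hu : ∀ v w w', χ v w → χ v w' → w = w') (b : Fin n → A)
    (hx : χ (cb c b) x) : χ (cb d b) z := by
  obtain ⟨a, h1, h2⟩ := h.h1 n χ hχ (Or.inl ⟨b, hx⟩)
  have heq : D L e (fun v : Fin 2 → M => v 0 = v 1) :=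
    Set.Definable.diagonal L e
  obtain ⟨w, w', h3, h4, h5⟩ := transfer2 h.same hχ (T := fun u v => u = v) heq a b
    ⟨x, x, h1, hx, rfl⟩
  rw [hu _ _ _ h2 h3, h5]
  exact h4

lemma K_lt (hM : IsOMinimal L M) (hA : e.Definable₁ L A) (h : Good L e A c d x z) {n : ℕ}
    {χ : (α ⊕ Fin n → M) → M → Prop}
    (hχ : DF L e χ) (hu : ∀ v w w', χ v w → χ v w' → w = w') (b : Fin n → A)
    (hx : ∃ w, χ (cb c b) w ∧ w < x) : ∃ w, χ (cb d b) w ∧ w < z := by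
  have := hM.denselyOrdered
  have := hM.noMinOrder
  have := hM.noMaxOrder
  have hlt : e.Definable L {x : Fin 2 → M | x 0 < x 1} := hM.definable_lt.mono (by simp)
  obtain ⟨w, hw, hwx⟩ := hx
  have hE := DF.EA hA hχ
  by_cases hxE : EA A χ c x
  · obtain ⟨a, h1, h2⟩ := h.h1 n χ hχ (Or.inl (EA_iff.1 hxE))
    obtain ⟨y, y', h3, h4, h5⟩ := transfer2 h.same hχ (T := fun u v => v < u) (D.lt hlt 1 0) a b
      ⟨x, w, h1, hw, hwx⟩
    rw [← hu _ _ _ h2 h3] at h5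
    exact ⟨y', h4, h5⟩
  · have hzE : ¬ EA A χ d z := fun hh => hxE ((h.h0 _ hE).2 hh)
    obtain ⟨w', hw'⟩ := transfer1 h.same hχ b ⟨w, hw⟩
    refine ⟨w', hw', ?_⟩
    obtain ⟨f1, f2⟩ := bd_factsP (hM.tame _ (hE.fiber c))
    obtain ⟨f1', f2'⟩ := bd_factsP (hM.tame _ (hE.fiber d))
    have hB := DF.bd hlt hE
    refine lt_transfer (S := EA A χ c) (S' := EA A χ d) f1 f2 f1' f2' (w := w) (x := x)
      ?_ ?_ ?_ ?_ ?_ ?_ hwx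
    · intro j
      exact transferU h.same hχ hu (R := fun v y => cnt (Bd (EA A χ (fun i => v (Sum.inl i)))) j y)
        ((DF.cnt hlt hB j).subst (fun i => Sum.inl (Sum.inl i)) (Sum.inr ())) b hw hw'
    · exact transferU h.same hχ hu (R := fun v y => Bd (EA A χ (fun i => v (Sum.inl i))) y)
        (hB.subst (fun i => Sum.inl (Sum.inl i)) (Sum.inr ())) b hw hw'
    · intro j
      exact h.h0 _ (DF.cnt hlt hB j)
    · exact h.h0 _ hB
    · exact fun hh => hxE (hh.1 (EA_iff.2 ⟨b, hw⟩))
    · exact fun hh => hzE (hh.1 (EA_iff.2 ⟨b, hw'⟩))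

lemma step_main (hM : IsOMinimal L M) (hA : e.Definable₁ L A) (h : Good L e A c d x z) {n : ℕ}
    {Q : (α ⊕ Fin n → M) → M → Prop} (hQ : DF L e Q) (b : Fin n → A) (hx : Q (cb c b) x) :
    Q (cb d b) z := by
  have := hM.denselyOrdered
  have := hM.noMinOrder
  have := hM.noMaxOrder
  have hlt : e.Definable L {x : Fin 2 → M | x 0 < x 1} := hM.definable_lt.mono (by simp)
  have hB := DF.bd hlt hQ
  have hC := DF.cnt hlt hB
  let χ : ℕ → (α ⊕ Fin n → M) → M → Prop := fun j v w =>
    Bd (Q v) w ∧ cnt (Bd (Q v)) j w ∧ ¬ cnt (Bd (Q v)) (j + 1) w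
  have hχ : ∀ j, DF L e (χ j) := fun j => D.and hB (D.and (hC j) (D.not (hC (j + 1))))
  have hu : ∀ j v w w', χ j v w → χ j v w' → w = w' := fun j v w w' => level_unique
  obtain ⟨f1, f2⟩ := bd_factsP (hM.tame _ (hQ.fiber (cb c b)))
  obtain ⟨f1', f2'⟩ := bd_factsP (hM.tame _ (hQ.fiber (cb d b)))
  have hc : ∀ j, cnt (Bd (Q (cb c b))) j x ↔ cnt (Bd (Q (cb d b))) j z := by
    intro j
    cases j with
    | zero => exact Iff.rfl
    | succ j =>
      rw [cnt_succ_iff f1, cnt_succ_iff f1']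
      exact ⟨K_lt hM hA h (hχ j) (hu j) b, K_lt hM hA h.symm (hχ j) (hu j) b⟩
  obtain ⟨j, hj1, hj2⟩ := cnt_exact f1 x
  by_cases hbx : Bd (Q (cb c b)) x
  · refine (K_eq h (χ := fun v w => Q v w ∧ χ j v w) (D.and hQ (hχ j)) ?_ b ⟨hx, hbx, hj1, hj2⟩).1
    exact fun v w w' h1 h2 => hu j v w w' h1.2 h2.2
  have hbz : ¬ Bd (Q (cb d b)) z := by
    intro hbz
    obtain ⟨i, hi1, hi2⟩ := cnt_exact f1' z
    exact hbx (K_eq h.symm (hχ i) (hu i) b ⟨hbz, hi1, hi2⟩).1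
  obtain ⟨w, hw1, hw2, hw3, hw4⟩ := transfer1 h.same (R := fun v w => Q v w ∧ ¬ Bd (Q v) w ∧
    cnt (Bd (Q v)) j w ∧ ¬ cnt (Bd (Q v)) (j + 1) w)
    (D.and hQ (D.and (D.not hB) (D.and (hC j) (D.not (hC (j + 1)))))) b ⟨x, hx, hbx, hj1, hj2⟩
  refine (mem_iff_of_cnt (S := Q (cb d b)) f1' f2' (x := w) (y := z) ?_ ?_).1 hw1
  · intro i
    rw [← hc i]
    by_cases hij : i ≤ j
    · exact ⟨fun _ => cnt_anti' hij hj1, fun _ => cnt_anti' hij hw3⟩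
    · have hij : j + 1 ≤ i := by omega
      exact ⟨fun hh => absurd (cnt_anti' hij hh) hw4, fun hh => absurd (cnt_anti' hij hh) hj2⟩
  · exact ⟨fun hh => absurd hh hw2, fun hh => absurd hh hbz⟩

end defin

section cards

variable {L : FirstOrder.Language.{u, u}} {M : Type u} [L.Structure M]

lemma card_sigma_nat {f : ℕ → Type u} {μ : Cardinal.{u}} (hμ : ℵ₀ ≤ μ) (h : ∀ n, #(f n) ≤ μ) :
    #(Σ n, f n) ≤ μ := by
  rw [mk_sigma]
  refine (Cardinal.sum_le_sum _ (fun _ => μ) h).trans ?_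
  rw [Cardinal.sum_const]
  simp only [mk_nat, lift_aleph0, lift_id', lift_id, lift_uzero]
  exact (Cardinal.mul_le_max_of_aleph0_le_left le_rfl).trans (max_le hμ le_rfl)

lemma card_formula_le (L : FirstOrder.Language.{u, u}) (α : Type) [Finite α] :
    #(L.Formula α) ≤ L.card + ℵ₀ := by
  have h1 : #(L.Formula α) ≤ #(Σ n, L.BoundedFormula α n) :=
    Cardinal.mk_le_of_injective (f := fun φ : L.BoundedFormula α 0 => (⟨0, φ⟩ : Σ n, _))
      (fun a b h => by simpa using h)
  refine h1.trans (BoundedFormula.card_le.trans (max_le le_add_self ?_))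
  rw [add_comm]
  refine add_le_add (by simp) ?_
  simp

lemma card_formula_le' (e : Set M) (he : e.Finite) (α : Type) [Finite α] :
    #(L[[e]].Formula α) ≤ L.card + ℵ₀ := by
  refine (card_formula_le _ _).trans ?_
  rw [card_withConstants, add_assoc]
  refine add_le_add (by simp) ?_
  have : #e ≤ ℵ₀ := by
    have := he.to_subtype
    exact (Cardinal.lt_aleph0_of_finite e).le
  rw [Cardinal.lift_id]
  exact Cardinal.add_le_aleph0.2 ⟨this, le_rfl⟩

lemma exists_param (A : Set M) {m : ℕ} (σ : (L[[↥A]])[[Fin m]].Sentence) :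
    ∃ (n : ℕ) (φ : L.Formula (Fin m ⊕ Fin n)) (b : Fin n → A),
      ∀ p : ((L[[↥A]]).completeTheory M).CompleteType (Fin m),
        σ ∈ p ↔ paramSentenceOver A φ b ∈ p := by
  classical
  obtain ⟨θ, rfl⟩ := Formula.equivSentence.surjective σ
  let θ' : L.BoundedFormula (A ⊕ Fin m) 0 := BoundedFormula.constantsVarsEquiv θ
  let F : Finset A := θ'.freeVarFinset.toLeft
  let g : F ≃ Fin F.card := F.equivFin
  let f : θ'.freeVarFinset → Fin m ⊕ Fin F.card := fun x => Sum.casesOn x.1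
        (fun a ha => Sum.inr (g ⟨a, by simpa [F] using ha⟩)) (fun i _ => Sum.inl i) x.2
  refine ⟨F.card, θ'.restrictFreeVar f, fun j => (g.symm j).1, fun p => ?_⟩
  obtain ⟨N, v, rfl⟩ := Theory.exists_modelType_is_realized_in _ p
  rw [paramSentenceOver, Theory.CompleteType.formula_mem_typeOf,
    Theory.CompleteType.formula_mem_typeOf]
  let _ : L.Structure N := (L.lhomWithConstants A).reduct N
  have : (L.lhomWithConstants A).IsExpansionOn N := LHom.isExpansionOn_reduct _ _
  rw [Formula.Realize, ← BoundedFormula.realize_constantsVarsEquiv (L := L)]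
  rw [Formula.Realize, BoundedFormula.realize_subst]
  change _ ↔ ((L.lhomWithConstants A).onFormula _).Realize _
  rw [LHom.realize_onFormula]
  refine (BoundedFormula.realize_restrictFreeVar _ ?_).symm
  rintro ⟨a | i, h⟩
  · simp [f]
  · simp [f]

end cards

section codes

variable {L : FirstOrder.Language.{u, u}} {M : Type u} [L.Structure M] [LinearOrder M]

lemma D.iff_formula {e : Set M} {α : Type} {P : (α → M) → Prop} (h : D L e P) :
    ∃ φ : L[[e]].Formula α, ∀ v, P v ↔ φ.Realize v := by
  obtain ⟨φ, hφ⟩ := h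
  exact ⟨φ, fun v => Set.ext_iff.1 hφ v⟩

open Classical in
/-- The code of an element. -/
noncomputable def pick {e A : Set M} {k : ℕ} (c : Fin k → M) (x : M)
    (i : Σ n, L[[e]].Formula ((Fin k ⊕ Fin n) ⊕ Unit)) : Option (List A) :=
  if h : ∃ a : Fin i.1 → A, i.2.Realize (Sum.elim (cb c a) (fun _ => x)) then
    some (List.ofFn h.choose) else none

lemma pick_spec {e A : Set M} {k : ℕ} {c d : Fin k → M} {x z : M}
    {n : ℕ} {φ : L[[e]].Formula ((Fin k ⊕ Fin n) ⊕ Unit)}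
    (h : pick (A := A) c x ⟨n, φ⟩ = pick (A := A) d z ⟨n, φ⟩)
    (hh : (∃ a : Fin n → A, φ.Realize (Sum.elim (cb c a) (fun _ => x))) ∨
      (∃ a : Fin n → A, φ.Realize (Sum.elim (cb d a) (fun _ => z)))) :
    ∃ a : Fin n → A, φ.Realize (Sum.elim (cb c a) (fun _ => x)) ∧
      φ.Realize (Sum.elim (cb d a) (fun _ => z)) := by
  unfold pick at h
  by_cases h1 : ∃ a : Fin n → A, φ.Realize (Sum.elim (cb c a) (fun _ => x)) <;>
    by_cases h2 : ∃ a : Fin n → A, φ.Realize (Sum.elim (cb d a) (fun _ => z))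
  · rw [dif_pos h1, dif_pos h2] at h
    have := List.ofFn_injective (Option.some_injective _ h)
    refine ⟨h1.choose, h1.choose_spec, ?_⟩
    rw [this]
    exact h2.choose_spec
  · rw [dif_pos h1, dif_neg h2] at h
    cases h
  · rw [dif_neg h1, dif_pos h2] at h
    cases h
  · exact absurd hh (by simp only [h1, h2, or_self, not_false_eq_true])

lemma codes (hM : IsOMinimal L M) {e A : Set M} (he : e.Finite) (hA : e.Definable₁ L A)
    (hA1 : 1 < #A) (k : ℕ) :
    ∃ (T : Type u) (code : (Fin k → M) → T), #T ≤ #A ^ (L.card + ℵ₀) ∧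
      ∀ c d, code c = code d → Same L e A c d := by
  set κ := L.card + ℵ₀ with hκ
  have hκ0 : ℵ₀ ≤ κ := le_add_self
  have h2A : 2 ≤ #A := Cardinal.two_le_iff_one_lt.2 hA1
  have h2 : (2 : Cardinal.{u}) ^ κ ≤ #A ^ κ := Cardinal.power_le_power_right h2A
  have hl0 : ℵ₀ ≤ #A ^ κ := hκ0.trans ((Cardinal.cantor κ).le.trans h2)
  have hmul : #A ^ κ * #A ^ κ = #A ^ κ := Cardinal.mul_eq_self hl0
  have hpow : (#A ^ κ) ^ κ = #A ^ κ := by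
    rw [← Cardinal.power_mul, Cardinal.mul_eq_self hκ0]
  have hAl : #A ≤ #A ^ κ := Cardinal.self_le_power _ (Cardinal.one_lt_aleph0.le.trans hκ0)
  have hA0 : #A ^ κ ≠ 0 := (Cardinal.aleph0_pos.trans_le hl0).ne'
  induction k with
  | zero =>
    refine ⟨PUnit, fun _ => ⟨⟩, ?_, fun c d _ => ?_⟩
    · simpa using Cardinal.one_lt_aleph0.le.trans hl0
    · rw [Subsingleton.elim c d]
      exact fun _ _ _ _ => Iff.rfl
  | succ k ih =>
    obtain ⟨T, code, hT, hcode⟩ := ih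
    refine ⟨T × Set (L[[e]].Formula (Fin k ⊕ Unit)) ×
      ((Σ n, L[[e]].Formula ((Fin k ⊕ Fin n) ⊕ Unit)) → Option (List A)),
      fun v => (code (fun i => v i.succ),
        {φ | φ.Realize (Sum.elim (fun i => v i.succ) (fun _ => v 0))},
        pick (fun i => v i.succ) (v 0)), ?_, ?_⟩
    · rw [Cardinal.mk_prod, Cardinal.mk_prod]
      simp only [Cardinal.lift_id]
      have b1 : #(Set (L[[e]].Formula (Fin k ⊕ Unit))) ≤ #A ^ κ := by
        rw [Cardinal.mk_set]
        exact (Cardinal.power_le_power_left two_ne_zero (card_formula_le' e he _)).trans h2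
      have b2 : #((Σ n, L[[e]].Formula ((Fin k ⊕ Fin n) ⊕ Unit)) → Option (List A)) ≤ #A ^ κ := by
        rw [← Cardinal.power_def]
        have c1 : #(Σ n, L[[e]].Formula ((Fin k ⊕ Fin n) ⊕ Unit)) ≤ κ :=
          card_sigma_nat hκ0 fun n => card_formula_le' e he _
        have c2 : #(Option (List A)) ≤ #A ^ κ := by
          rw [Cardinal.mk_option]
          refine Cardinal.add_le_of_le hl0 ?_ (Cardinal.one_lt_aleph0.le.trans hl0)
          exact (Cardinal.mk_list_le_max _).trans (max_le hl0 hAl)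
        calc _ ≤ (#A ^ κ) ^ #(Σ n, L[[e]].Formula ((Fin k ⊕ Fin n) ⊕ Unit)) :=
              Cardinal.power_le_power_right c2
          _ ≤ (#A ^ κ) ^ κ := Cardinal.power_le_power_left hA0 c1
          _ = _ := hpow
      calc _ ≤ #A ^ κ * (#A ^ κ * #A ^ κ) := mul_le_mul' hT (mul_le_mul' b1 b2)
        _ = _ := by rw [hmul, hmul]
    · intro v w hvw
      simp only [Prod.mk.injEq] at hvw
      obtain ⟨hv1, hv2, hv3⟩ := hvw
      have hg : Good L e A (fun i => v (Fin.succ i)) (fun i => w (Fin.succ i)) (v 0) (w 0) := by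
        refine ⟨hcode _ _ hv1, ?_, ?_⟩
        · intro Q hQ
          obtain ⟨φ, hφ⟩ := D.iff_formula hQ
          have t1 := hφ (Sum.elim (fun i => v (Fin.succ i)) (fun _ => v 0))
          have t2 := hφ (Sum.elim (fun i => w (Fin.succ i)) (fun _ => w 0))
          have t3 := Set.ext_iff.1 hv2 φ
          simp only [Set.mem_ofPred_eq] at t3
          simp only [Sum.elim_inl, Sum.elim_inr] at t1 t2
          rw [t1, t2, t3]
        · intro n Q hQ hh
          obtain ⟨φ, hφ⟩ := D.iff_formula hQ
          have t : ∀ (c : Fin k → M) (x : M) (a : Fin n → A), Q (cb c a) x ↔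
              φ.Realize (Sum.elim (cb c a) (fun _ => x)) := fun c x a =>
            hφ (Sum.elim (cb c a) (fun _ => x))
          simp only [t] at hh ⊢
          exact pick_spec (congrFun hv3 ⟨n, φ⟩) hh
      intro n P hP b
      let τ : Fin (k + 1) ⊕ Fin n → (Fin k ⊕ Fin n) ⊕ Unit :=
        Sum.elim (Fin.cases (Sum.inr ()) (fun i => Sum.inl (Sum.inl i))) (fun j => Sum.inl (Sum.inr j))
      let Q : (Fin k ⊕ Fin n → M) → M → Prop := fun u y => P (fun i => Sum.elim u (fun _ => y) (τ i))
      have hQ : DF L e Q := by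
        have := hP.subst τ
        refine (congrArg (D L e) (funext fun u => ?_)).mp this
        refine congrArg P (funext fun i => ?_)
        rcases τ i with i | i <;> rfl
      have hPQ : ∀ v : Fin (k + 1) → M, Q (cb (fun i => v (Fin.succ i)) b) (v 0) ↔ P (cb v b) := by
        intro v
        refine iff_of_eq (congrArg P (funext fun i => ?_))
        rcases i with i | i
        · refine Fin.cases ?_ (fun i => ?_) i <;> rfl
        · rfl
      rw [← hPQ, ← hPQ]
      exact ⟨step_main hM hA hg hQ b, step_main hM hA hg.symm hQ b⟩

/-- the trace of a formula -/
def trace (A : Set M) (n : ℕ) {k : ℕ} (ψ : L.Formula (Fin n ⊕ Fin k)) (c : Fin k → M) :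
    Set (Fin n → A) := {b : Fin n → A | ψ.Realize (Sum.elim (fun i => (b i : M)) c)}

lemma trace_eq {e A : Set M} {n k : ℕ} (ψ : L.Formula (Fin n ⊕ Fin k)) {c d : Fin k → M}
    (h : Same L e A c d) : trace A n ψ c = trace A n ψ d := by
  ext b
  have hD : D L e (fun v : Fin n ⊕ Fin k → M => ψ.Realize v) :=
    Set.Definable.mono (Set.empty_definable_iff.2 ⟨ψ, rfl⟩) (Set.empty_subset e)
  have := h n _ (hD.subst Sum.swap) b
  have key : ∀ c : Fin k → M, (fun i => cb c b (Sum.swap i)) = Sum.elim (fun i => (b i : M)) c := by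
    intro c; funext i; rcases i with i | i <;> rfl
  simp only [key] at this
  exact this

lemma card_traces (hM : IsOMinimal L M) {e A : Set M} (he : e.Finite) (hA : e.Definable₁ L A)
    (hA1 : 1 < #A) (hl0 : ℵ₀ ≤ #A ^ (L.card + ℵ₀)) (hκl : L.card + ℵ₀ ≤ #A ^ (L.card + ℵ₀))
    (n : ℕ) :
    #{X : Set (Fin n → A) | ∃ (k : ℕ) (ψ : L.Formula (Fin n ⊕ Fin k)) (c : Fin k → M),
      X = trace A n ψ c} ≤ #A ^ (L.card + ℵ₀) := by
  choose T code hT hcode using codes hM he hA hA1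
  have h1 : #(Σ k, L.Formula (Fin n ⊕ Fin k) × T k) ≤ #A ^ (L.card + ℵ₀) := by
    refine card_sigma_nat hl0 fun k => ?_
    rw [Cardinal.mk_prod, Cardinal.lift_id, Cardinal.lift_id]
    calc _ ≤ _ := mul_le_mul' ((card_formula_le L _).trans hκl) (hT k)
      _ = _ := Cardinal.mul_eq_self hl0
  refine le_trans ?_ h1
  have hX : ∀ X : {X : Set (Fin n → A) | ∃ (k : ℕ) (ψ : L.Formula (Fin n ⊕ Fin k))
      (c : Fin k → M), X = trace A n ψ c}, ∃ (k : ℕ) (ψ : L.Formula (Fin n ⊕ Fin k))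
      (c : Fin k → M), X.1 = trace A n ψ c := fun X => X.2
  choose k ψ c hc using hX
  refine Cardinal.mk_le_of_injective (f := fun X => ⟨k X, ψ X, code (k X) (c X)⟩) ?_
  have gen : ∀ k (ψ : L.Formula (Fin n ⊕ Fin k)) c k' (ψ' : L.Formula (Fin n ⊕ Fin k')) c',
      (⟨k, ψ, code k c⟩ : Σ k, L.Formula (Fin n ⊕ Fin k) × T k) = ⟨k', ψ', code k' c'⟩ →
      trace A n ψ c = trace A n ψ' c' := by
    intro k ψ c k' ψ' c' h
    obtain rfl : k = k' := congrArg Sigma.fst h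
    have h := eq_of_heq (Sigma.mk.inj_iff.1 h).2
    have hψ : ψ = ψ' := congrArg Prod.fst h
    have h2 : code k c = code k c' := congrArg Prod.snd h
    subst hψ
    exact trace_eq ψ (hcode k _ _ h2)
  intro X Y hXY
  apply Subtype.ext
  rw [hc X, hc Y]
  exact gen _ _ _ _ _ _ hXY

end codes

end OMinCount

/-- If `M` is an o-minimal `L`-structure and `A ⊆ M` is a definable set with `|A| > 1`, then
the set `S^def(A)` of definable types over `A` (in any tuple of object variables) has
cardinality at most `|A| ^ (|L| + ℵ₀)`. -/
theorem card_definable_types_over_le {L : FirstOrder.Language.{u, u}} {M : Type u}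
    [L.Structure M] [LinearOrder M] (hM : IsOMinimal L M) (A : Set M)
    (hAdef : (Set.univ : Set M).Definable₁ L A) (hA : 1 < #A) :
    #(Σ m : ℕ, {p : ((L[[↥A]]).completeTheory M).CompleteType (Fin m) //
        IsDefinableTypeOver A p}) ≤ #A ^ (L.card + ℵ₀) := by
  have hκ0 : ℵ₀ ≤ L.card + ℵ₀ := le_add_self
  have h2A : 2 ≤ #A := Cardinal.two_le_iff_one_lt.2 hA
  have hκl : L.card + ℵ₀ ≤ #A ^ (L.card + ℵ₀) :=
    (Cardinal.cantor _).le.trans (Cardinal.power_le_power_right h2A)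
  have hl0 : ℵ₀ ≤ #A ^ (L.card + ℵ₀) := hκ0.trans hκl
  obtain ⟨e, -, he⟩ := Set.definable_iff_finitely_definable.1 hAdef
  have hTr := OMinCount.card_traces hM e.finite_toSet he hA hl0 hκl
  refine OMinCount.card_sigma_nat hl0 fun m => ?_
  have hpi : #((i : Σ n, L.Formula (Fin m ⊕ Fin n)) → {X : Set (Fin i.1 → A) |
      ∃ (k : ℕ) (ψ : L.Formula (Fin i.1 ⊕ Fin k)) (c : Fin k → M),
        X = OMinCount.trace A i.1 ψ c}) ≤ #A ^ (L.card + ℵ₀) := by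
    rw [Cardinal.mk_pi]
    refine (Cardinal.prod_le_prod _ (fun _ : (Σ n, L.Formula (Fin m ⊕ Fin n)) =>
      #A ^ (L.card + ℵ₀)) fun i => hTr i.1).trans ?_
    rw [Cardinal.prod_const, Cardinal.lift_id, Cardinal.lift_id]
    refine (Cardinal.power_le_power_left (Cardinal.aleph0_pos.trans_le hl0).ne'
      (OMinCount.card_sigma_nat hκ0 fun n => OMinCount.card_formula_le L _)).trans ?_
    rw [← Cardinal.power_mul, Cardinal.mul_eq_self hκ0]
  refine le_trans (Cardinal.mk_le_of_injective (f := fun p (i : Σ n, L.Formula (Fin m ⊕ Fin n)) =>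
    ⟨{b : Fin i.1 → A | paramSentenceOver A i.2 b ∈ p.1}, p.2 i.1 i.2⟩) ?_) hpi
  intro p q hpq
  apply Subtype.ext
  refine SetLike.ext fun σ => ?_
  obtain ⟨n, φ, b, hb⟩ := OMinCount.exists_param A σ
  rw [hb, hb]
  have := congrArg Subtype.val (congrFun hpq ⟨n, φ⟩)
  exact Set.ext_iff.1 this b
end

section
/- Let M be an o-minimal structure and let (A, τ) be an infinite topological space definable in M. Then the topological weight of (A, τ) is at most |A|, i.e. τ has a basis of cardinality at most |A|. -/
open FirstOrder FirstOrder.Language Set Cardinal Filter Topology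

universe u

/-- A topological space `(A, t)` is definable in the structure `M` when `A ⊆ M^n` is a
definable set and the topology `t` admits a definable basis, i.e. a basis of the form
`{ψ(A;b) : b ∈ S}` for some formula `ψ(x;y)` and definable set `S ⊆ M^|y|`. -/
def IsDefinableTopSpace (L : FirstOrder.Language) {M : Type*} [L.Structure M] {n : ℕ}
    (A : Set (Fin n → M)) (t : TopologicalSpace A) : Prop :=
  (Set.univ : Set M).Definable L A ∧
  ∃ (k : ℕ) (ψ : L.Formula (Fin n ⊕ Fin k)) (S : Set (Fin k → M)),
    (Set.univ : Set M).Definable L S ∧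
    @TopologicalSpace.IsTopologicalBasis A t
      ((fun b => {x : A | ψ.Realize (Sum.elim (x : Fin n → M) b)}) '' S)


namespace WeightProof

section dfn

variable (L : FirstOrder.Language.{u, u}) {M : Type u} [L.Structure M]

def Dfn {α : Type} (R : (α → M) → Prop) : Prop := (Set.univ : Set M).Definable L {v | R v}

variable {L}

theorem Dfn.and {α : Type} {R S : (α → M) → Prop} (hR : Dfn L R) (hS : Dfn L S) :
    Dfn L (fun v => R v ∧ S v) := Set.Definable.inter hR hS

theorem Dfn.not {α : Type} {R : (α → M) → Prop} (hR : Dfn L R) :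
    Dfn L (fun v => ¬ R v) := Set.Definable.compl hR

theorem Dfn.imp {α : Type} {R S : (α → M) → Prop} (hR : Dfn L R) (hS : Dfn L S) :
    Dfn L (fun v => R v → S v) := by
  have := (hR.and hS.not).not
  simpa using this

theorem Dfn.tt {α : Type} : Dfn L (fun _ : α → M => True) := by
  simpa [Dfn] using Set.definable_univ

theorem Dfn.ff {α : Type} : Dfn L (fun _ : α → M => False) := by
  simpa [Dfn] using Set.definable_empty

theorem Dfn.exN {α β : Type} [Finite β] {R : (α → M) → (β → M) → Prop}
    (h : Dfn L (fun w : α ⊕ β → M => R (fun a => w (Sum.inl a)) (fun b => w (Sum.inr b)))) :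
    Dfn L (fun v => ∃ x, R v x) := by
  obtain ⟨φ, hφ⟩ := h
  refine ⟨φ.iExs β, ?_⟩
  ext v
  simp only [mem_ofPred_eq, Formula.realize_iExs]
  refine exists_congr fun x => ?_
  have := congrArg (fun s => Sum.elim v x ∈ s) hφ
  simpa using this

theorem Dfn.ex {α : Type} {R : (α → M) → M → Prop}
    (h : Dfn L (fun w : α ⊕ Unit → M => R (fun a => w (Sum.inl a)) (w (Sum.inr ())))) :
    Dfn L (fun v => ∃ x, R v x) := by
  have := Dfn.exN (R := fun v (x : Unit → M) => R v (x ())) h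
  convert this using 2 with v
  exact ⟨fun ⟨x, hx⟩ => ⟨fun _ => x, hx⟩, fun ⟨x, hx⟩ => ⟨x (), hx⟩⟩

theorem Dfn.all {α : Type} {R : (α → M) → M → Prop}
    (h : Dfn L (fun w : α ⊕ Unit → M => R (fun a => w (Sum.inl a)) (w (Sum.inr ())))) :
    Dfn L (fun v => ∀ x, R v x) := by
  have := (Dfn.ex (R := fun v x => ¬ R v x) h.not).not
  simpa using this

theorem Dfn.subst {α β : Type} {R : (α → M) → Prop} (h : Dfn L R) (f : α → β ⊕ M) :
    Dfn L (fun w : β → M => R (fun a => Sum.elim w id (f a))) := by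
  obtain ⟨φ, hφ⟩ := h
  refine ⟨BoundedFormula.subst φ (fun a => Sum.elim (fun b => Term.var b)
    (fun m => (L.con (⟨m, trivial⟩ : (Set.univ : Set M))).term) (f a)), ?_⟩
  ext v
  simp only [mem_ofPred_eq, Formula.Realize, BoundedFormula.realize_subst]
  have := congrArg (fun s => (fun a => Sum.elim v id (f a)) ∈ s) hφ
  simp only [mem_ofPred_eq, Formula.Realize] at this
  rw [this]
  have e : (fun a => Sum.elim v id (f a)) = fun a => (Sum.elim (fun b => Term.var b)
    (fun m => (L.con (⟨m, trivial⟩ : (Set.univ : Set M))).term) (f a) :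
      L[[(Set.univ : Set M)]].Term β).realize v := by
    funext a
    cases f a <;> simp
  rw [e]

theorem Dfn.re {α β : Type} {R : (α → M) → Prop} (h : Dfn L R) (f : α → β) :
    Dfn L (fun w : β → M => R (fun a => w (f a))) := h.subst (fun a => Sum.inl (f a))

variable (L) in
/-- definable ternary families -/
def Dfn3 {n k : ℕ} (R : (Fin n → M) → (Fin k → M) → M → Prop) : Prop :=
  ∀ (α : Type) (f : Fin n → α) (g : Fin k → α) (z : α),
    Dfn L (fun w : α → M => R (fun i => w (f i)) (fun j => w (g j)) (w z))

end dfn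

section order

variable {M : Type u} [LinearOrder M]

def Fr (X : M → Prop) (p : M) : Prop :=
  ∀ a c, a < p → p < c → (∃ u, a < u ∧ u < c ∧ X u) ∧ ∃ u, a < u ∧ u < c ∧ ¬ X u

def Rk (X : M → Prop) : ℕ → M → Prop
  | 0, _ => True
  | (i+1), z => ∃ d, d < z ∧ X d ∧ Rk X i d

theorem Rk.mono {X : M → Prop} {i : ℕ} {z z' : M} (h : Rk X i z) (hz : z ≤ z') : Rk X i z' := by
  cases i with
  | zero => trivial
  | succ i => obtain ⟨d, h1, h2⟩ := h; exact ⟨d, h1.trans_le hz, h2⟩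

theorem Rk.card {X : M → Prop} {i : ℕ} {z : M} (h : Rk X i z) :
    ∃ F : Finset M, F.card = i ∧ ∀ d ∈ F, X d ∧ d < z := by
  induction i generalizing z with
  | zero => exact ⟨∅, rfl, by simp⟩
  | succ i ih =>
    obtain ⟨d, h1, h2, h3⟩ := h
    obtain ⟨F, hF, hF'⟩ := ih h3
    refine ⟨insert d F, ?_, ?_⟩
    · rw [Finset.card_insert_of_notMem, hF]
      intro hd
      exact lt_irrefl _ (hF' d hd).2
    · intro e he
      rcases Finset.mem_insert.1 he with rfl | he
      · exact ⟨h2, h1⟩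
      · exact ⟨(hF' e he).1, (hF' e he).2.trans h1⟩

theorem exists_rk {X : M → Prop} (hX : {x | X x}.Finite) (z : M) :
    ∃ i, Rk X i z ∧ ¬ Rk X (i+1) z := by
  by_contra! hcon
  have : ∀ i, Rk X i z := by
    intro i
    induction i with
    | zero => trivial
    | succ i ih => exact hcon i ih
  obtain ⟨F, hF, hF'⟩ := (this (hX.toFinset.card + 1)).card
  have : F ⊆ hX.toFinset := fun d hd => by simpa using (hF' d hd).1
  have := Finset.card_le_card this
  omega

theorem rk_sep {X : M → Prop} {i : ℕ} {z z' p : M} (h : Rk X i z) (h' : ¬ Rk X (i+1) z')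
    (hp : X p) (h1 : z ≤ p) (h2 : p < z') : False :=
  h' ⟨p, h2, hp, h.mono h1⟩

theorem rk_unique {X : M → Prop} {i : ℕ} {z z' : M} (h : Rk X i z) (h' : Rk X i z')
    (k : ¬ Rk X (i+1) z) (k' : ¬ Rk X (i+1) z') (hz : X z) (hz' : X z') : z = z' := by
  rcases lt_trichotomy z z' with hlt | he | hlt
  · exact (rk_sep h k' hz le_rfl hlt).elim
  · exact he
  · exact (rk_sep h' k hz' le_rfl hlt).elim

theorem fr_finite [DenselyOrdered M] [NoMinOrder M] [NoMaxOrder M] {s : Set M}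
    (hs : IsFinUnionPointsIntervals s) : {p | Fr (fun x => x ∈ s) p}.Finite := by
  letI : TopologicalSpace M := Preorder.topology M
  haveI : OrderTopology M := ⟨rfl⟩
  have key : {p | Fr (fun x => x ∈ s) p} ⊆ frontier s := by
    intro p hp
    rw [frontier_eq_closure_inter_closure]
    constructor
    · rw [mem_closure_iff_nhds]
      intro t ht
      obtain ⟨a, c, hac, hsub⟩ := mem_nhds_iff_exists_Ioo_subset.1 ht
      obtain ⟨⟨u, h1, h2, h3⟩, _⟩ := hp a c hac.1 hac.2
      exact ⟨u, hsub ⟨h1, h2⟩, h3⟩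
    · rw [mem_closure_iff_nhds]
      intro t ht
      obtain ⟨a, c, hac, hsub⟩ := mem_nhds_iff_exists_Ioo_subset.1 ht
      obtain ⟨_, ⟨u, h1, h2, h3⟩⟩ := hp a c hac.1 hac.2
      exact ⟨u, hsub ⟨h1, h2⟩, h3⟩
  refine Set.Finite.subset ?_ key
  obtain ⟨P, I, rfl⟩ := hs
  have hun : ∀ s t : Set M, (frontier s).Finite → (frontier t).Finite →
      (frontier (s ∪ t)).Finite := fun s t h1 h2 =>
    (Set.Finite.union (h1.inter_of_left _) (h2.inter_of_right _)).subset (frontier_union_subset s t)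
  have hin : ∀ s t : Set M, (frontier s).Finite → (frontier t).Finite →
      (frontier (s ∩ t)).Finite := fun s t h1 h2 =>
    (Set.Finite.union (h1.inter_of_left _) (h2.inter_of_right _)).subset (frontier_inter_subset s t)
  clear key
  refine hun _ _ (P.finite_toSet.subset P.finite_toSet.isClosed.frontier_subset) ?_
  classical
  induction I using Finset.induction_on with
  | empty => simp
  | insert p I hp ih =>
    rw [Finset.set_biUnion_insert]
    refine hun _ _ ?_ ih
    refine hin {x : M | p.1 < (x : WithBot M)} {x : M | (x : WithTop M) < p.2} ?_ ?_
    · induction p.1 using WithBot.recBotCoe with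
      | bot => simp
      | coe a =>
        have : {x : M | (a : WithBot M) < x} = Ioi a := by ext; simp
        rw [this, frontier_Ioi]; simp
    · induction p.2 using WithTop.recTopCoe with
      | top => simp
      | coe a =>
        have : {x : M | (x : WithTop M) < a} = Iio a := by ext; simp
        rw [this, frontier_Iio]; simp

theorem tame_lub [DenselyOrdered M] [NoMinOrder M] [NoMaxOrder M] {s : Set M}
    (hs : IsFinUnionPointsIntervals s) (hne : s.Nonempty) (hb : BddAbove s) :
    ∃ a, IsLUB s a := by
  have hun : ∀ s t : Set M, (s.Nonempty → BddAbove s → ∃ a, IsLUB s a) →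
      (t.Nonempty → BddAbove t → ∃ a, IsLUB t a) →
      ((s ∪ t).Nonempty → BddAbove (s ∪ t) → ∃ a, IsLUB (s ∪ t) a) := by
    intro s t h1 h2 hn hb
    rcases s.eq_empty_or_nonempty with rfl | hs
    · simp only [empty_union] at *; exact h2 hn hb
    rcases t.eq_empty_or_nonempty with rfl | ht
    · simp only [union_empty] at *; exact h1 hn hb
    obtain ⟨a, ha⟩ := h1 hs (hb.mono subset_union_left)
    obtain ⟨b, hb⟩ := h2 ht (hb.mono subset_union_right)
    exact ⟨_, ha.union hb⟩
  obtain ⟨P, I, rfl⟩ := hs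
  refine hun _ _ ?_ ?_ hne hb
  · intro h _
    exact ⟨_, (Finset.isGreatest_max' P (by simpa using h)).isLUB⟩
  clear hne hb
  classical
  induction I using Finset.induction_on with
  | empty => simp
  | insert p I hp ih =>
    rw [Finset.set_biUnion_insert]
    refine hun _ _ ?_ ih
    rintro ⟨x, hx1, hx2⟩ ⟨b, hb⟩
    rcases p with ⟨p, q⟩
    simp only at hx1 hx2 hb ⊢
    have up : ∀ y : M, x ≤ y → p < (y : WithBot M) := fun y hy =>
      hx1.trans_le (WithBot.coe_le_coe.2 hy)
    induction q using WithTop.recTopCoe with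
    | top =>
      obtain ⟨c, hc⟩ := exists_gt (max x b)
      have := hb (a := c) ⟨up c ((le_max_left _ _).trans hc.le), WithTop.coe_lt_top c⟩
      exact (lt_irrefl _ (((le_max_right x b).trans_lt hc).trans_le this)).elim
    | coe a =>
      have hxa : x < a := by simpa using hx2
      refine ⟨a, fun y hy => (by simpa using hy.2 : y < a).le, fun d hd => ?_⟩
      by_contra! hlt
      obtain ⟨e, he1, he2⟩ := exists_between (max_lt hxa hlt)
      have := hd (a := e) ⟨up e ((le_max_left _ _).trans he1.le), by simpa using he2⟩
      exact lt_irrefl _ (((le_max_right x d).trans_lt he1).trans_le this)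

end order

section omin

variable {L : FirstOrder.Language.{u, u}} {M : Type u} [L.Structure M] [LinearOrder M]

theorem Dfn.lt (hM : IsOMinimal L M) {α : Type} (i j : α) :
    Dfn L (fun w : α → M => w i < w j) := by
  have : Dfn L (fun x : Fin 2 → M => x 0 < x 1) := hM.definable_lt.mono (empty_subset _)
  simpa using this.re ![i, j]

theorem Dfn.lt_cv (hM : IsOMinimal L M) {α : Type} (c : M) (j : α) :
    Dfn L (fun w : α → M => c < w j) := by
  have : Dfn L (fun x : Fin 2 → M => x 0 < x 1) := hM.definable_lt.mono (empty_subset _)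
  simpa using this.subst ![Sum.inr c, Sum.inl j]

theorem Dfn.lt_vc (hM : IsOMinimal L M) {α : Type} (c : M) (j : α) :
    Dfn L (fun w : α → M => w j < c) := by
  have : Dfn L (fun x : Fin 2 → M => x 0 < x 1) := hM.definable_lt.mono (empty_subset _)
  simpa using this.subst ![Sum.inl j, Sum.inr c]

theorem tame' (hM : IsOMinimal L M) {X : M → Prop} (h : Dfn L (fun w : Fin 1 → M => X (w 0))) :
    IsFinUnionPointsIntervals {x | X x} := hM.tame _ h

theorem const (hM : IsOMinimal L M) {X : M → Prop} (h : Dfn L (fun w : Fin 1 → M => X (w 0)))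
    {z z' : M} (hz : z ≤ z') (hfr : ∀ p, z ≤ p → p ≤ z' → ¬ Fr X p) (hX : X z) : X z' := by
  have := hM.denselyOrdered
  have := hM.noMinOrder
  have := hM.noMaxOrder
  have hY : Dfn L (fun w : Fin 1 → M => ¬ (w 0 < z) ∧ ¬ (z' < w 0) ∧
      ∀ u, ¬ u < z → ¬ w 0 < u → X u) := by
    refine (Dfn.lt_vc hM _ _).not.and ((Dfn.lt_cv hM _ _).not.and (Dfn.all ?_))
    refine (Dfn.lt_vc hM _ _).not.imp ((Dfn.lt hM _ _).not.imp ?_)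
    exact h.re (fun _ => Sum.inr ())
  have hT := tame' (X := fun w => ¬ (w < z) ∧ ¬ (z' < w) ∧ ∀ u, ¬ u < z → ¬ w < u → X u) hM hY
  simp only [not_lt] at hT
  have hzY : z ∈ {w | z ≤ w ∧ w ≤ z' ∧ ∀ u, z ≤ u → u ≤ w → X u} :=
    ⟨le_rfl, hz, fun u h1 h2 => (le_antisymm h2 h1) ▸ hX⟩
  obtain ⟨s, hs⟩ := tame_lub hT ⟨z, hzY⟩ ⟨z', fun y hy => hy.2.1⟩
  have hzs : z ≤ s := hs.1 hzY
  have hsz : s ≤ z' := hs.2 fun y hy => hy.2.1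
  have hns := hfr s hzs hsz
  simp only [Fr, not_forall] at hns
  obtain ⟨a, c, ha, hc, hac⟩ := hns
  obtain ⟨y, hy, hay, hys⟩ := hs.exists_between ha
  have hall : ∀ u, a < u → u < c → X u := by
    by_contra! hcon
    obtain ⟨u, hu⟩ := hcon
    exact hac ⟨⟨y, hay, hys.trans_lt hc, hy.2.2 y hy.1 le_rfl⟩, u, hu⟩
  rcases hsz.lt_or_eq with hlt | rfl
  · obtain ⟨e, he1, he2⟩ := exists_between (lt_min hc hlt)
    have : e ≤ s := hs.1 ⟨hzs.trans he1.le, (he2.trans_le (min_le_right _ _)).le, fun u h1 h2 => by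
      rcases le_or_gt u y with h3 | h3
      · exact hy.2.2 u h1 h3
      · exact hall u (hay.trans h3) (h2.trans_lt (he2.trans_le (min_le_left _ _)))⟩
    exact (lt_irrefl _ (he1.trans_le this)).elim
  · exact hall s ha hc

theorem fr_not {X : M → Prop} {p : M} (h : Fr (fun x => ¬ X x) p) : Fr X p := by
  intro a c h1 h2
  have := h a c h1 h2
  simpa [and_comm] using this

theorem const_iff (hM : IsOMinimal L M) {X : M → Prop}
    (h : Dfn L (fun w : Fin 1 → M => X (w 0)))
    {z z' : M} (hz : z ≤ z') (hfr : ∀ p, z ≤ p → p ≤ z' → ¬ Fr X p) : X z ↔ X z' := by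
  refine ⟨const hM h hz hfr, fun h' => ?_⟩
  by_contra hn
  exact const (X := fun x => ¬ X x) hM h.not hz (fun p h1 h2 h3 => hfr p h1 h2 (fr_not h3)) hn h'

variable {n k : ℕ}

theorem Dfn3.fr (hM : IsOMinimal L M) {R : (Fin n → M) → (Fin k → M) → M → Prop}
    (h : Dfn3 L R) : Dfn3 L (fun x y z => Fr (R x y) z) := by
  intro α f g z
  unfold Fr
  refine Dfn.all (Dfn.all ((Dfn.lt hM _ _).imp ((Dfn.lt hM _ _).imp (Dfn.and ?_ ?_))))
  · exact Dfn.ex ((Dfn.lt hM _ _).and ((Dfn.lt hM _ _).and (h _ _ _ _)))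
  · exact Dfn.ex ((Dfn.lt hM _ _).and ((Dfn.lt hM _ _).and (h _ _ _ _).not))

theorem Dfn3.rk (hM : IsOMinimal L M) {R : (Fin n → M) → (Fin k → M) → M → Prop}
    (h : Dfn3 L R) (i : ℕ) : Dfn3 L (fun x y z => Rk (R x y) i z) := by
  induction i with
  | zero => intro α f g z; exact Dfn.tt
  | succ i ih =>
    intro α f g z
    unfold Rk
    exact Dfn.ex ((Dfn.lt hM _ _).and ((h _ _ _ _).and (ih _ _ _ _)))

theorem Dfn3.fiber {R : (Fin n → M) → (Fin k → M) → M → Prop}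
    (h : Dfn3 L R) (x : Fin n → M) (y : Fin k → M) :
    Dfn L (fun w : Fin 1 → M => R x y (w 0)) :=
  (h (Fin n ⊕ Fin k ⊕ Unit) Sum.inl (fun j => Sum.inr (Sum.inl j)) (Sum.inr (Sum.inr ()))).subst
    (Sum.elim (fun i => Sum.inr (x i)) (Sum.elim (fun j => Sum.inr (y j)) (fun _ => Sum.inl 0)))

theorem Dfn3.fr_fin (hM : IsOMinimal L M) {R : (Fin n → M) → (Fin k → M) → M → Prop}
    (h : Dfn3 L R) (x : Fin n → M) (y : Fin k → M) : {z | Fr (R x y) z}.Finite := by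
  have := hM.denselyOrdered
  have := hM.noMinOrder
  have := hM.noMaxOrder
  exact fr_finite (tame' hM (h.fiber x y))

theorem main (hM : IsOMinimal L M) (A : Set (Fin n → M)) (hA : (Set.univ : Set M).Definable L A)
    (hAinf : A.Infinite) (k : ℕ) (R : (Fin n → M) → (Fin k → M) → Prop)
    (hR : Dfn L (fun w : Fin n ⊕ Fin k → M => R (fun i => w (Sum.inl i)) (fun j => w (Sum.inr j)))) :
    ∃ F : Set (Set A), #F ≤ #A ∧ ∀ b, {x : A | R x b} ∈ F := by
  have hinf : ℵ₀ ≤ #A := Cardinal.infinite_iff.1 hAinf.to_subtype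
  induction k with
  | zero =>
    refine ⟨{{x : A | R x Fin.elim0}}, ?_, fun b => ?_⟩
    · rw [mk_singleton]; exact one_le_aleph0.trans hinf
    · rw [Subsingleton.elim b Fin.elim0]; rfl
  | succ k ih =>
    let Q : (Fin n → M) → (Fin k → M) → M → Prop := fun x y z => R x (Fin.cons z y)
    have hQ : Dfn3 L Q := by
      intro α f g z
      have := hR.re (Sum.elim f (Fin.cons z g : Fin (k+1) → α))
      have e : ∀ w : α → M, (Fin.cons (w z) (fun j => w (g j)) : Fin (k+1) → M) =
          fun j => w ((Fin.cons z g : Fin (k+1) → α) j) := by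
        intro w
        funext j
        refine Fin.cases ?_ (fun j => ?_) j <;> simp
      simp only [Q, e]
      exact this
    let B : (Fin n → M) → (Fin k → M) → M → Prop := fun _ y z => ∃ x, x ∈ A ∧ Fr (Q x y) z
    have hA' : Dfn L (fun v => v ∈ A) := hA
    have hB : Dfn3 L B := by
      intro α f g z
      exact Dfn.exN ((hA'.re _).and (hQ.fr hM _ _ _ _))
    -- the three kinds of families
    let T1 : (Fin n → M) → ℕ → (Fin n → M) → (Fin k → M) → Prop := fun x0 i x y =>
      ∃ z, Fr (Q x0 y) z ∧ Rk (Fr (Q x0 y)) i z ∧ ¬ Rk (Fr (Q x0 y)) (i+1) z ∧ Q x y z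
    let T2 : ℕ → (Fin n → M) → (Fin k → M) → Prop := fun i x y =>
      ∃ z, Fr (B x y) z ∧ Rk (Fr (B x y)) i z ∧ ¬ Rk (Fr (B x y)) (i+1) z ∧ Q x y z
    let T3 : ℕ → (Fin n → M) → (Fin k → M) → Prop := fun i x y =>
      ∃ z, ¬ Fr (B x y) z ∧ ¬ B x y z ∧ Rk (Fr (B x y)) i z ∧ ¬ Rk (Fr (B x y)) (i+1) z ∧ Q x y z
    have hT1 : ∀ x0 i, Dfn L (fun w : Fin n ⊕ Fin k → M =>
        T1 x0 i (fun i => w (Sum.inl i)) (fun j => w (Sum.inr j))) := by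
      intro x0 i
      have : Dfn L (fun w : Fin n ⊕ Fin n ⊕ Fin k → M =>
        T1 (fun i => w (Sum.inl i)) i (fun i => w (Sum.inr (Sum.inl i)))
          (fun j => w (Sum.inr (Sum.inr j)))) :=
        Dfn.ex ((hQ.fr hM _ _ _ _).and (((hQ.fr hM).rk hM i _ _ _ _).and
          (((hQ.fr hM).rk hM (i+1) _ _ _ _).not.and (hQ _ _ _ _))))
      exact this.subst (Sum.elim (fun i => Sum.inr (x0 i)) (fun j => Sum.inl j))
    have hT2 : ∀ i, Dfn L (fun w : Fin n ⊕ Fin k → M =>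
        T2 i (fun i => w (Sum.inl i)) (fun j => w (Sum.inr j))) := fun i =>
        Dfn.ex ((hB.fr hM _ (fun i => Sum.inl (Sum.inl i)) _ _).and (((hB.fr hM).rk hM i _ (fun i => Sum.inl (Sum.inl i)) _ _).and
          (((hB.fr hM).rk hM (i+1) _ (fun i => Sum.inl (Sum.inl i)) _ _).not.and (hQ _ _ _ _))))
    have hT3 : ∀ i, Dfn L (fun w : Fin n ⊕ Fin k → M =>
        T3 i (fun i => w (Sum.inl i)) (fun j => w (Sum.inr j))) := fun i =>
        Dfn.ex ((hB.fr hM _ (fun i => Sum.inl (Sum.inl i)) _ _).not.and ((hB _ (fun i => Sum.inl (Sum.inl i)) _ _).not.and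
          (((hB.fr hM).rk hM i _ (fun i => Sum.inl (Sum.inl i)) _ _).and
          (((hB.fr hM).rk hM (i+1) _ (fun i => Sum.inl (Sum.inl i)) _ _).not.and (hQ _ _ _ _)))))
    let T : A × ℕ ⊕ ℕ ⊕ ℕ → (Fin n → M) → (Fin k → M) → Prop :=
      Sum.elim (fun p => T1 p.1 p.2) (Sum.elim T2 T3)
    have hT : ∀ j, Dfn L (fun w : Fin n ⊕ Fin k → M =>
        T j (fun i => w (Sum.inl i)) (fun j => w (Sum.inr j))) := by
      rintro (p | i | i)
      · exact hT1 _ _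
      · exact hT2 _
      · exact hT3 _
    choose F hF1 hF2 using fun j => ih (T j) (hT j)
    refine ⟨⋃ j, F j, ?_, fun b => ?_⟩
    · refine (mk_iUnion_le _).trans ?_
      refine (mul_le_mul' ?_ (ciSup_le' hF1)).trans (mul_eq_self hinf).le
      simp only [mk_sum, mk_prod, mk_nat, lift_id, lift_aleph0, lift_uzero]
      rw [mul_aleph0_eq hinf]
      simp [add_eq_left hinf, hinf]
    · obtain ⟨z0, y, rfl⟩ : ∃ (z0 : M) (y : Fin k → M), b = Fin.cons z0 y :=
        ⟨b 0, Fin.tail b, (Fin.cons_self_tail b).symm⟩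
      suffices ∃ j, ∀ x ∈ A, Q x y z0 ↔ T j x y by
        obtain ⟨j, hj⟩ := this
        refine mem_iUnion.2 ⟨j, ?_⟩
        have e : {x : A | R x (Fin.cons z0 y)} = {x : A | T j x y} := by
          ext x
          exact hj x x.2
        rw [e]
        exact hF2 j y
      by_cases hb : ∃ x, x ∈ A ∧ Fr (Q x y) z0
      · obtain ⟨x0, hx0, hfr⟩ := hb
        obtain ⟨i, hi, hi'⟩ := exists_rk (hQ.fr_fin hM x0 y) z0
        refine ⟨Sum.inl (⟨x0, hx0⟩, i), fun x hx => ⟨fun h => ⟨z0, hfr, hi, hi', h⟩, ?_⟩⟩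
        rintro ⟨z, h1, h2, h3, h4⟩
        rwa [rk_unique hi h2 hi' h3 hfr h1]
      · obtain ⟨xx, hxx⟩ := hAinf.nonempty
        have hb' : ∀ x, ¬ B x y z0 := fun _ => hb
        obtain ⟨i, hi, hi'⟩ := exists_rk (hB.fr_fin hM xx y) z0
        by_cases hfr : Fr (B xx y) z0
        · refine ⟨Sum.inr (Sum.inl i), fun x hx => ⟨fun h => ⟨z0, hfr, hi, hi', h⟩, ?_⟩⟩
          rintro ⟨z, h1, h2, h3, h4⟩
          rwa [rk_unique hi h2 hi' h3 hfr h1]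
        · refine ⟨Sum.inr (Sum.inr i), fun x hx => ⟨fun h => ⟨z0, hfr, hb, hi, hi', h⟩, ?_⟩⟩
          rintro ⟨z, h1, h2, h3, h4, h5⟩
          have key : ∀ u v : M, u ≤ v → ¬ B x y u → ¬ Fr (B x y) v →
              Rk (Fr (B x y)) i u → ¬ Rk (Fr (B x y)) (i+1) v → (Q x y u ↔ Q x y v) := by
            intro u v huv hu hv hru hrv
            have hno : ∀ p, u ≤ p → p ≤ v → ¬ Fr (B x y) p := by
              intro p hp1 hp2 hp
              rcases hp2.lt_or_eq with hlt | rfl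
              · exact rk_sep hru hrv hp hp1 hlt
              · exact hv hp
            refine const_iff hM (hQ.fiber x y) huv fun p hp1 hp2 hp => hu ?_
            exact (const_iff hM (hB.fiber x y) hp1
              fun q hq1 hq2 => hno q hq1 (hq2.trans hp2)).2 ⟨x, hx, hp⟩
          rcases le_total z0 z with hle | hle
          · exact (key z0 z hle hb h1 hi h4).2 h5
          · exact (key z z0 hle h2 hfr h3 hi').1 h5

end omin

end WeightProof

/-- An infinite topological space definable in an o-minimal structure has weight at most
`|A|`: its topology admits a basis of cardinality at most `|A|`. -/
theorem weight_le_of_definable_top_space {L : FirstOrder.Language.{u, u}} {M : Type u}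
    [L.Structure M] [LinearOrder M] (hM : IsOMinimal L M) {n : ℕ} (A : Set (Fin n → M))
    (t : TopologicalSpace A) (h : IsDefinableTopSpace L A t) (hAinf : A.Infinite) :
    ∃ B : Set (Set A), @TopologicalSpace.IsTopologicalBasis A t B ∧ #B ≤ #A := by
  obtain ⟨hA, k, ψ, S, -, hB⟩ := h
  have hψ : WeightProof.Dfn L (fun w : Fin n ⊕ Fin k → M => ψ.Realize (Sum.elim
      (fun i => w (Sum.inl i)) (fun j => w (Sum.inr j)))) := by
    have : (∅ : Set M).Definable L {w : Fin n ⊕ Fin k → M | ψ.Realize w} :=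
      Set.empty_definable_iff.2 ⟨ψ, rfl⟩
    have h2 := this.mono (empty_subset Set.univ)
    unfold WeightProof.Dfn
    convert h2 using 4 with w
    funext a
    cases a <;> rfl
  obtain ⟨F, hF, hF'⟩ := WeightProof.main hM A hA hAinf k (fun x b => ψ.Realize (Sum.elim x b)) hψ
  refine ⟨_, hB, (mk_le_mk_of_subset ?_).trans hF⟩
  rintro _ ⟨b, _, rfl⟩
  exact hF' b
end

section
/- Let M be an o-minimal structure and let (A, τ) be a topological space definable in M with A countable. Then (A, τ) is second-countable, i.e. τ has a countable basis. -/
open FirstOrder FirstOrder.Language Set Cardinal Filter Topology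

universe u

namespace CDT

section
variable (L : FirstOrder.Language.{u, u}) {M : Type u} [L.Structure M]

/-- Definability (with parameters) of a relation. -/
def D {κ : Type} (R : (κ → M) → Prop) : Prop :=
  (Set.univ : Set M).Definable L {v : κ → M | R v}

variable {L}

theorem D.and {κ : Type} {R S : (κ → M) → Prop} (h : D L R) (h' : D L S) :
    D L (fun v => R v ∧ S v) := Set.Definable.inter h h'

theorem D.not {κ : Type} {R : (κ → M) → Prop} (h : D L R) :
    D L (fun v => ¬ R v) := Set.Definable.compl h

theorem D.imp {κ : Type} {R S : (κ → M) → Prop} (h : D L R) (h' : D L S) :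
    D L (fun v => R v → S v) := by
  have := (h.and h'.not).not
  simpa using this

theorem D.iff {κ : Type} {R S : (κ → M) → Prop} (h : D L R) (h' : D L S) :
    D L (fun v => R v ↔ S v) := by
  have := (h.imp h').and (h'.imp h)
  simpa only [iff_iff_implies_and_implies] using this

theorem D.comp {κ κ' : Type} {R : (κ → M) → Prop} (h : D L R) (f : κ → κ') :
    D L (fun v : κ' → M => R (fun i => v (f i))) := Set.Definable.preimage_comp f h

theorem D.exn {κ : Type} {n : ℕ} {R : (κ → M) → (Fin n → M) → Prop}
    (h : D L (fun w : κ ⊕ Fin n → M => R (fun i => w (Sum.inl i)) (fun i => w (Sum.inr i)))) :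
    D L (fun v => ∃ x, R v x) := Set.Definable.exists_of_finite h

theorem D.ex {κ : Type} {R : (κ → M) → M → Prop}
    (h : D L (fun w : κ ⊕ Fin 1 → M => R (fun i => w (Sum.inl i)) (w (Sum.inr 0)))) :
    D L (fun v => ∃ x, R v x) := by
  have := D.exn (n := 1) (R := fun v x => R v (x 0)) h
  convert! this using 2 with v
  exact ⟨fun ⟨x, hx⟩ => ⟨fun _ => x, hx⟩, fun ⟨x, hx⟩ => ⟨x 0, hx⟩⟩

theorem D.all {κ : Type} {R : (κ → M) → M → Prop}
    (h : D L (fun w : κ ⊕ Fin 1 → M => R (fun i => w (Sum.inl i)) (w (Sum.inr 0)))) :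
    D L (fun v => ∀ x, R v x) := by
  have := (D.ex (R := fun v x => ¬ R v x) h.not).not
  simpa using this

theorem D.const {κ κ' : Type} [Finite κ] [Finite κ'] {R : (κ' ⊕ κ → M) → Prop} (h : D L R)
    (a : κ' → M) : D L (fun v : κ → M => R (Sum.elim a v)) := by
  refine Set.Definable.preimage_map (F := fun v : κ → M => Sum.elim a v) ?_ h
  rintro (i | i)
  · exact L.definableFun_const (a := a i) κ (Set.mem_univ _)
  · exact Set.DefinableFun.proj L (i := i)

/-- Definable families. -/
def F1 (L : FirstOrder.Language.{u, u}) {M : Type u} [L.Structure M] {k : ℕ}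
    (G : (Fin k → M) → M → Prop) : Prop :=
  ∀ (κ : Type) (q : Fin k → κ) (r : κ), D L (fun w : κ → M => G (fun i => w (q i)) (w r))

def F2 (L : FirstOrder.Language.{u, u}) {M : Type u} [L.Structure M] {n k : ℕ}
    (ψ : (Fin n → M) → (Fin k → M) → Prop) : Prop :=
  ∀ (κ : Type) (p : Fin n → κ) (q : Fin k → κ),
    D L (fun w : κ → M => ψ (fun i => w (p i)) (fun i => w (q i)))

def F3 (L : FirstOrder.Language.{u, u}) {M : Type u} [L.Structure M] {n k : ℕ}
    (ψ : (Fin n → M) → (Fin k → M) → M → Prop) : Prop :=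
  ∀ (κ : Type) (p : Fin n → κ) (q : Fin k → κ) (r : κ),
    D L (fun w : κ → M => ψ (fun i => w (p i)) (fun i => w (q i)) (w r))

theorem F3.const {n k : ℕ} {ψ : (Fin n → M) → (Fin k → M) → M → Prop} (h : F3 L ψ)
    (a : Fin n → M) : F1 L (ψ a) := by
  intro κ q r
  have h1 := h (Fin n ⊕ (Fin k ⊕ Fin 1)) (fun i => .inl i) (fun i => .inr (.inl i)) (.inr (.inr 0))
  exact (h1.const a).comp (Sum.elim q (fun _ => r))

theorem F1.const {k : ℕ} {G : (Fin k → M) → M → Prop} (h : F1 L G)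
    (b : Fin k → M) : D L (fun x : Fin 1 → M => G b (x 0)) := by
  have h1 := h (Fin k ⊕ Fin 1) (fun i => .inl i) (.inr 0)
  exact h1.const b

end

section order
variable {M : Type u} [LinearOrder M]

/-- Points at which a set is not locally constant. -/
def bd (X : M → Prop) (c : M) : Prop :=
  ¬ ∃ l u, l < c ∧ c < u ∧ ∀ z, l < z → z < u → (X z ↔ X c)

/-- `F` separates `X`. -/
def Sep (X : M → Prop) (F : Finset M) : Prop :=
  ∀ x y, x ≤ y → (∀ f ∈ F, ¬ (x ≤ f ∧ f ≤ y)) → (X x ↔ X y)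

theorem exists_sep {s : Set M} (h : IsFinUnionPointsIntervals s) :
    ∃ F, Sep (fun x => x ∈ s) F := by
  classical
  obtain ⟨P, I, rfl⟩ := h
  let f1 : WithBot M × WithTop M → Finset M := fun p => WithBot.recBotCoe ∅ (fun m => {m}) p.1
  let f2 : WithBot M × WithTop M → Finset M := fun p => WithTop.recTopCoe ∅ (fun m => {m}) p.2
  refine ⟨P ∪ I.biUnion f1 ∪ I.biUnion f2, fun x y hxy hF => ?_⟩
  have hP : ∀ f ∈ P, ¬ (x ≤ f ∧ f ≤ y) := fun f hf => hF f (by simp [hf])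
  have h1 : ∀ p ∈ I, (p.1 < (x : WithBot M) ↔ p.1 < (y : WithBot M)) := by
    rintro ⟨p1, p2⟩ hp
    have := fun f hf => hF f (Finset.mem_union_left _ (Finset.mem_union_right _
      (Finset.mem_biUnion.2 ⟨_, hp, hf⟩)))
    induction p1 using WithBot.recBotCoe with
    | bot => simp
    | coe m =>
      have := this m (by simp [f1])
      simp only [WithBot.coe_lt_coe]
      grind
  have h2 : ∀ p ∈ I, ((x : WithTop M) < p.2 ↔ (y : WithTop M) < p.2) := by
    rintro ⟨p1, p2⟩ hp
    have := fun f hf => hF f (Finset.mem_union_right _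
      (Finset.mem_biUnion.2 ⟨_, hp, hf⟩))
    induction p2 using WithTop.recTopCoe with
    | top => simp
    | coe m =>
      have := this m (by simp [f2])
      simp only [WithTop.coe_lt_coe]
      grind
  have hx : x ∉ P := fun h => hP x h ⟨le_rfl, hxy⟩
  have hy : y ∉ P := fun h => hP y h ⟨hxy, le_rfl⟩
  simp only [Set.mem_union, Finset.mem_coe, hx, hy, Set.mem_iUnion, Set.mem_ofPred_eq, false_or]
  constructor
  · rintro ⟨p, hp, ha, hb⟩
    exact ⟨p, hp, (h1 p hp).1 ha, (h2 p hp).1 hb⟩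
  · rintro ⟨p, hp, ha, hb⟩
    exact ⟨p, hp, (h1 p hp).2 ha, (h2 p hp).2 hb⟩

theorem exists_lower [NoMinOrder M] (F : Finset M) (c : M) :
    ∃ l, l < c ∧ ∀ f ∈ F, ¬ (l < f ∧ f < c) := by
  classical
  induction F using Finset.induction_on with
  | empty => simpa using exists_lt c
  | insert a s _ ih =>
    obtain ⟨l, hl, h⟩ := ih
    by_cases ha : l < a ∧ a < c
    · refine ⟨a, ha.2, fun f hf => ?_⟩
      grind
    · exact ⟨l, hl, by grind⟩

theorem exists_upper [NoMaxOrder M] (F : Finset M) (c : M) :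
    ∃ l, c < l ∧ ∀ f ∈ F, ¬ (c < f ∧ f < l) := by
  classical
  induction F using Finset.induction_on with
  | empty => simpa using exists_gt c
  | insert a s _ ih =>
    obtain ⟨l, hl, h⟩ := ih
    by_cases ha : c < a ∧ a < l
    · refine ⟨a, ha.1, fun f hf => ?_⟩
      grind
    · exact ⟨l, hl, by grind⟩

theorem sep_erase [DenselyOrdered M] [DecidableEq M] {X : M → Prop} {F : Finset M} (h : Sep X F)
    {f : M} (hbd : ¬ bd X f) : Sep X (F.erase f) := by
  rw [bd, not_not] at hbd
  obtain ⟨l, u, hl, hu, hX⟩ := hbd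
  have left : ∀ x, x ≤ f → (∀ g ∈ F.erase f, ¬ (x ≤ g ∧ g ≤ f)) → (X x ↔ X f) := by
    intro x hx hg
    rcases hx.eq_or_lt with rfl | hx
    · rfl
    obtain ⟨x', h1, h2⟩ := exists_between (max_lt hx hl)
    rw [max_lt_iff] at h1
    rw [h x x' h1.1.le (by grind), hX x' h1.2 (h2.trans hu)]
  have right : ∀ y, f ≤ y → (∀ g ∈ F.erase f, ¬ (f ≤ g ∧ g ≤ y)) → (X y ↔ X f) := by
    intro x hx hg
    rcases hx.eq_or_lt with rfl | hx
    · rfl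
    obtain ⟨x', h1, h2⟩ := exists_between (lt_min hx hu)
    rw [lt_min_iff] at h2
    rw [← h x' x h2.1.le (by grind), hX x' (hl.trans h1) h2.2]
  intro x y hxy hF
  by_cases hf : x ≤ f ∧ f ≤ y
  · rw [left x hf.1 (by grind), right y hf.2 (by grind)]
  · exact h x y hxy (by grind)

theorem bd_sep [DenselyOrdered M] [NoMinOrder M] [NoMaxOrder M] {X : M → Prop} {F : Finset M}
    (h : Sep X F) : ∃ F', Sep X F' ∧ ∀ c, c ∈ F' ↔ bd X c := by
  classical
  induction F using Finset.strongInduction with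
  | H F ih =>
    by_cases hF : ∃ f ∈ F, ¬ bd X f
    · obtain ⟨f, hf, hb⟩ := hF
      exact ih _ (Finset.erase_ssubset hf) (sep_erase h hb)
    · push Not at hF
      refine ⟨F, h, fun c => ⟨hF c, fun hc => ?_⟩⟩
      by_contra hcF
      obtain ⟨l, hl, hl'⟩ := exists_lower F c
      obtain ⟨u, hu, hu'⟩ := exists_upper F c
      refine hc ⟨l, u, hl, hu, fun z h1 h2 => ?_⟩
      rcases le_total z c with hz | hz
      · exact h z c hz (by grind)
      · exact (h c z hz (by grind)).symm

end order

section main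
variable {L : FirstOrder.Language.{u, u}} {M : Type u} [L.Structure M] [LinearOrder M]

theorem D_lt (hM : IsOMinimal L M) {κ : Type} (i j : κ) : D L (fun w : κ → M => w i < w j) := by
  have h : D L (fun x : Fin 2 → M => x 0 < x 1) := hM.definable_lt.mono (Set.empty_subset _)
  exact h.comp ![i, j]

theorem F1.bd_finite (hM : IsOMinimal L M) {k : ℕ} {G : (Fin k → M) → M → Prop} (h : F1 L G)
    (b : Fin k → M) : ∃ F', Sep (G b) F' ∧ ∀ c, c ∈ F' ↔ bd (G b) c := by
  have := hM.denselyOrdered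
  have := hM.noMinOrder
  have := hM.noMaxOrder
  obtain ⟨F, hF⟩ := exists_sep (hM.tame {c | G b c} (h.const b))
  exact bd_sep hF

theorem F3.bd (hM : IsOMinimal L M) {n k : ℕ} {ψ : (Fin n → M) → (Fin k → M) → M → Prop}
    (h : F3 L ψ) : F3 L (fun a b c => bd (ψ a b) c) := by
  intro κ p q r
  refine D.not (D.ex (D.ex (D.and (D_lt hM _ _) (D.and (D_lt hM _ _) (D.all ?_)))))
  exact D.imp (D_lt hM _ _) (D.imp (D_lt hM _ _) (D.iff (h _ _ _ _) (h _ _ _ _)))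

theorem F1.bd (hM : IsOMinimal L M) {k : ℕ} {G : (Fin k → M) → M → Prop}
    (h : F1 L G) : F1 L (fun b c => bd (G b) c) := by
  intro κ q r
  refine D.not (D.ex (D.ex (D.and (D_lt hM _ _) (D.and (D_lt hM _ _) (D.all ?_)))))
  exact D.imp (D_lt hM _ _) (D.imp (D_lt hM _ _) (D.iff (h _ _ _) (h _ _ _)))

/-- At least `j` elements of `G b` below `c ∈ G b`. -/
def lev {k : ℕ} (G : (Fin k → M) → M → Prop) : ℕ → (Fin k → M) → M → Prop
  | 0 => G
  | j + 1 => fun b c => G b c ∧ ∃ c', c' < c ∧ lev G j b c'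

theorem lev_def (hM : IsOMinimal L M) {k : ℕ} {G : (Fin k → M) → M → Prop} (h : F1 L G) (j : ℕ) :
    F1 L (lev G j) := by
  induction j with
  | zero => exact h
  | succ j ih =>
    intro κ q r
    exact D.and (h _ _ _) (D.ex (D.and (D_lt hM _ _) (ih _ _ _)))

theorem lev_mem {k : ℕ} {G : (Fin k → M) → M → Prop} {j : ℕ} {b c} (h : lev G j b c) : G b c := by
  cases j with
  | zero => exact h
  | succ j => exact h.1

theorem lev_card {k : ℕ} {G : (Fin k → M) → M → Prop} {b} {F : Finset M} (hF : ∀ c, G b c → c ∈ F)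
    (j : ℕ) : ∀ c, lev G j b c → j ≤ (F.filter (· < c)).card := by
  induction j with
  | zero => intros; omega
  | succ j ih =>
    rintro c ⟨_, c', hc, h⟩
    refine Nat.succ_le_of_lt (lt_of_le_of_lt (ih c' h) (Finset.card_lt_card ?_))
    refine Finset.ssubset_iff_of_subset ?_ |>.2 ⟨c', ?_, ?_⟩
    · intro x hx
      simp only [Finset.mem_filter] at hx ⊢
      exact ⟨hx.1, hx.2.trans hc⟩
    · simp [hF c' (lev_mem h), hc]
    · simp

variable {n : ℕ} (A : Set (Fin n → M))

theorem finite_family (hM : IsOMinimal L M) {k : ℕ}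
    (IH : ∀ ψ : (Fin n → M) → (Fin k → M) → Prop, F2 L ψ →
      (Set.range (fun b => {a | a ∈ A ∧ ψ a b})).Countable)
    {G : (Fin k → M) → M → Prop} (hG : F1 L G)
    (hfin : ∀ b, ∃ F : Finset M, ∀ c, G b c → c ∈ F)
    {ψ : (Fin n → M) → (Fin k → M) → M → Prop} (hψ : F3 L ψ) :
    {s | ∃ b c, G b c ∧ s = {a | a ∈ A ∧ ψ a b c}}.Countable := by
  let χ : ℕ → (Fin n → M) → (Fin k → M) → Prop := fun j a b =>
    ∃ c, (lev G j b c ∧ ¬ lev G (j + 1) b c) ∧ ψ a b c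
  have hχ : ∀ j, F2 L (χ j) := by
    intro j κ p q
    exact D.ex (D.and (D.and (lev_def hM hG j _ _ _) (lev_def hM hG (j + 1) _ _ _).not)
      (hψ _ _ _ _))
  refine (Set.countable_iUnion fun j => IH _ (hχ j)).mono ?_
  rintro s ⟨b, c, hc, rfl⟩
  have hex : ∃ j, ¬ lev G j b c := by
    obtain ⟨F, hF⟩ := hfin b
    refine ⟨(F.filter (· < c)).card + 1, fun h => ?_⟩
    have := lev_card hF _ c h
    omega
  classical
  obtain ⟨j, hj1, hj2⟩ : ∃ j, lev G j b c ∧ ¬ lev G (j + 1) b c := by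
    by_contra! hcon
    obtain ⟨j, hj⟩ := hex
    exact hj (Nat.rec hc (fun j ih => hcon j ih) j)
  refine Set.mem_iUnion.2 ⟨j, b, ?_⟩
  ext a
  simp only [Set.mem_ofPred_eq, χ]
  refine and_congr_right fun _ => ⟨?_, fun h => ⟨c, ⟨hj1, hj2⟩, h⟩⟩
  rintro ⟨c', ⟨h1, h2⟩, h⟩
  rcases lt_trichotomy c c' with hlt | rfl | hlt
  · exact absurd ⟨lev_mem h1, c, hlt, hj1⟩ h2
  · exact h
  · exact absurd ⟨hc, c', hlt, h1⟩ hj2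

theorem countable_step (hM : IsOMinimal L M) (hA : A.Countable)
    (hAd : (Set.univ : Set M).Definable L A) {k : ℕ}
    (IH : ∀ ψ : (Fin n → M) → (Fin k → M) → Prop, F2 L ψ →
      (Set.range (fun b => {a | a ∈ A ∧ ψ a b})).Countable)
    {ψ : (Fin n → M) → (Fin k → M) → M → Prop} (hψ : F3 L ψ) :
    {s | ∃ b c, s = {a | a ∈ A ∧ ψ a b c}}.Countable := by
  have := hM.denselyOrdered
  have := hM.noMinOrder
  have hAD : D L (fun v : Fin n → M => v ∈ A) := hAd
  let E : (Fin k → M) → M → Prop := fun b c => ∃ a, a ∈ A ∧ bd (ψ a b) c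
  have hE : F1 L E := by
    intro κ q r
    exact D.exn (D.and (hAD.comp _) (hψ.bd hM _ _ _ _))
  let Lm : (Fin n → M) → (Fin k → M) → M → Prop := fun a b c =>
    ∃ y, c < y ∧ ∀ z, c < z → z < y → ψ a b z
  have hL : F3 L Lm := by
    intro κ p q r
    exact D.ex (D.and (D_lt hM _ _) (D.all (D.imp (D_lt hM _ _) (D.imp (D_lt hM _ _)
      (hψ _ _ _ _)))))
  let Lb : (Fin n → M) → (Fin k → M) → Prop := fun a b => ∃ y, ∀ z, z < y → ψ a b z
  have hLb : F2 L Lb := by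
    intro κ p q
    exact D.ex (D.all (D.imp (D_lt hM _ _) (hψ _ _ _ _)))
  have hEfin : ∀ b, ∃ F : Finset M, ∀ c, bd (E b) c → c ∈ F := fun b => by
    obtain ⟨F, _, hF⟩ := hE.bd_finite hM b
    exact ⟨F, fun c => (hF c).2⟩
  have c1 : ∀ a, {s | ∃ b c, bd (ψ a b) c ∧ s = {a | a ∈ A ∧ ψ a b c}}.Countable := fun a =>
    finite_family A hM IH ((hψ.const a).bd hM) (fun b => by
      obtain ⟨F, _, hF⟩ := (hψ.const a).bd_finite hM b
      exact ⟨F, fun c => (hF c).2⟩) hψ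
  have c2 := finite_family A hM IH (hE.bd hM) hEfin hψ
  have c3 := finite_family A hM IH (hE.bd hM) hEfin hL
  have c4 := IH _ hLb
  refine ((hA.biUnion fun a _ => c1 a).union (c2.union (c3.union c4))).mono ?_
  rintro s ⟨b, c, rfl⟩
  by_cases hc1 : E b c
  · obtain ⟨a, ha, h⟩ := hc1
    exact Or.inl (Set.mem_biUnion ha ⟨b, c, h, rfl⟩)
  right
  by_cases hc2 : bd (E b) c
  · exact Or.inl ⟨b, c, hc2, rfl⟩
  right
  obtain ⟨F, hF, hFm⟩ := hE.bd_finite hM b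
  -- constancy below `c`
  have key : ∀ z, z ≤ c → (∀ f ∈ F, ¬ (z ≤ f ∧ f ≤ c)) → ∀ a ∈ A, (ψ a b z ↔ ψ a b c) := by
    intro z hz hzF a ha
    obtain ⟨F', hF', hFm'⟩ := (hψ.const a).bd_finite hM b
    refine hF' z c hz fun f hf hzf => hc1 ?_
    refine (hF f c hzf.2 fun g hg hg' => hzF g hg ⟨hzf.1.trans hg'.1, hg'.2⟩).1 ?_
    exact ⟨a, ha, (hFm' f).1 hf⟩
  have hcF : c ∉ F := fun h => hc2 ((hFm c).1 h)
  by_cases hlow : (F.filter (· < c)).Nonempty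
  · left
    obtain ⟨d, hd, hdmax⟩ := (F.filter (· < c)).exists_max_image id hlow
    simp only [Finset.mem_filter, id] at hd hdmax
    refine ⟨b, d, (hFm d).1 hd.1, ?_⟩
    have key' : ∀ z, d < z → z ≤ c → ∀ a ∈ A, (ψ a b z ↔ ψ a b c) := by
      intro z hz hzc
      refine key z hzc fun f hf hzf => ?_
      have hfc : f < c := lt_of_le_of_ne hzf.2 (fun h => hcF (h ▸ hf))
      exact absurd (hdmax f ⟨hf, hfc⟩) (not_le.2 (hz.trans_le hzf.1))
    ext a
    simp only [Set.mem_ofPred_eq, Lm]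
    refine and_congr_right fun ha => ⟨fun h => ⟨c, hd.2, fun z h1 h2 => ?_⟩, ?_⟩
    · exact (key' z h1 h2.le a ha).2 h
    · rintro ⟨y, hy, h⟩
      obtain ⟨z, h1, h2⟩ := exists_between (lt_min hy hd.2)
      rw [lt_min_iff] at h2
      exact (key' z h1 h2.2.le a ha).1 (h z h1 h2.1)
  · right
    refine ⟨b, ?_⟩
    have key' : ∀ z, z ≤ c → ∀ a ∈ A, (ψ a b z ↔ ψ a b c) := by
      intro z hzc
      refine key z hzc fun f hf hzf => ?_
      have hfc : f < c := lt_of_le_of_ne hzf.2 (fun h => hcF (h ▸ hf))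
      exact hlow ⟨f, by simp [hf, hfc]⟩
    ext a
    simp only [Set.mem_ofPred_eq, Lb]
    refine and_congr_right fun ha => ⟨?_, fun h => ⟨c, fun z h2 => ?_⟩⟩
    · rintro ⟨y, h⟩
      obtain ⟨z, h2⟩ := exists_lt (min y c)
      rw [lt_min_iff] at h2
      exact (key' z h2.2.le a ha).1 (h z h2.1)
    · exact (key' z h2.le a ha).2 h

theorem countable_family (hM : IsOMinimal L M) (hA : A.Countable)
    (hAd : (Set.univ : Set M).Definable L A) (k : ℕ) :
    ∀ ψ : (Fin n → M) → (Fin k → M) → Prop, F2 L ψ →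
      (Set.range (fun b => {a | a ∈ A ∧ ψ a b})).Countable := by
  induction k with
  | zero => intro ψ _; exact Set.countable_range _
  | succ k IH =>
    intro ψ hψ
    have h3 : F3 L (fun a (b : Fin k → M) (c : M) => ψ a (Fin.snoc b c : Fin (k + 1) → M)) := by
      intro κ p q r
      have := hψ κ p (Fin.snoc q r : Fin (k + 1) → κ)
      convert! this using 3 with w
      exact (Fin.comp_snoc (α := κ) w q r).symm
    refine (countable_step A hM hA hAd IH h3).mono ?_
    rintro s ⟨b, rfl⟩
    exact ⟨Fin.init b, b (Fin.last k), by simp [Fin.snoc_init_self]⟩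

end main

end CDT

/-- A countable topological space definable in an o-minimal structure is second-countable. -/
theorem secondCountable_of_countable_definable_top_space {L : FirstOrder.Language.{u, u}}
    {M : Type u} [L.Structure M] [LinearOrder M] (hM : IsOMinimal L M) {n : ℕ}
    (A : Set (Fin n → M)) (t : TopologicalSpace A) (h : IsDefinableTopSpace L A t)
    (hA : A.Countable) :
    @SecondCountableTopology A t := by
  obtain ⟨hAd, k, ψ, S, -, hB⟩ := h
  have hψ : CDT.F2 L (fun (a : Fin n → M) (b : Fin k → M) => ψ.Realize (Sum.elim a b)) := by
    intro κ p q
    have h0 : CDT.D L (fun w : Fin n ⊕ Fin k → M => ψ.Realize w) :=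
      (Set.empty_definable_iff.2 ⟨ψ, rfl⟩ : (∅ : Set M).Definable L _).mono (Set.empty_subset _)
    have h1 := h0.comp (Sum.elim p q)
    convert! h1 using 3 with w
    ext (i | i) <;> rfl
  have hc := CDT.countable_family A hM hA hAd k _ hψ
  refine @TopologicalSpace.IsTopologicalBasis.secondCountableTopology A t _ hB ?_
  refine (hc.image (fun s => {x : A | (x : Fin n → M) ∈ s})).mono ?_
  rintro _ ⟨b, -, rfl⟩
  refine ⟨_, ⟨b, rfl⟩, ?_⟩
  ext x
  simp
end

section
/- No topological space definable in an o-minimal structure is homeomorphic to the one-point compactification of the rational numbers ℚ (with ℚ carrying its usual order topology). -/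
open FirstOrder FirstOrder.Language Set Cardinal Filter Topology

universe u

namespace OPQ

/-- definable (with parameters) predicates -/
def D (L : FirstOrder.Language.{u, u}) {M : Type u} [L.Structure M] {β : Type}
    (p : (β → M) → Prop) : Prop := (Set.univ : Set M).Definable L {v | p v}

/-- maps given by terms -/
def Tm (L : FirstOrder.Language.{u, u}) {M : Type u} [L.Structure M] {β : Type}
    (c : (β → M) → M) : Prop := ∃ t : (L[[(Set.univ : Set M)]]).Term β, ∀ v, c v = t.realize v

section
variable {L : FirstOrder.Language.{u, u}} {M : Type u} [L.Structure M] {α β γ : Type}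

lemma Tm.coord (i : β) : Tm L (fun v : β → M => v i) := ⟨Term.var i, fun _ => rfl⟩

lemma Tm.const (a : M) : Tm L (fun _ : β → M => a) :=
  ⟨(L.con (⟨a, trivial⟩ : (Set.univ : Set M))).term, fun v => by
    rw [Term.realize_con]⟩

lemma D.subst {p : (β → M) → Prop} (h : D L p) (g : (γ → M) → (β → M))
    (hg : ∀ i, Tm L (fun v => g v i)) : D L (fun v => p (g v)) := by
  obtain ⟨φ, hφ⟩ := h
  choose t ht using hg
  refine ⟨BoundedFormula.subst φ t, ?_⟩
  ext v
  have h1 : p (g v) ↔ φ.Realize (g v) := by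
    have := Set.ext_iff.1 hφ (g v)
    exact this
  have h2 : g v = fun a => (t a).realize v := funext fun i => ht i v
  change p (g v) ↔ Formula.Realize (BoundedFormula.subst φ t) v
  rw [h1, Formula.Realize, Formula.Realize, BoundedFormula.realize_subst, h2]

lemma D.and {p q : (β → M) → Prop} (hp : D L p) (hq : D L q) : D L (fun v => p v ∧ q v) :=
  Set.Definable.inter hp hq

lemma D.not {p : (β → M) → Prop} (hp : D L p) : D L (fun v => ¬ p v) :=
  Set.Definable.compl hp

lemma D.congr {p q : (β → M) → Prop} (hp : D L p) (h : ∀ v, q v ↔ p v) : D L q := by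
  have : q = p := funext fun v => propext (h v)
  rw [this]; exact hp

lemma D.or {p q : (β → M) → Prop} (hp : D L p) (hq : D L q) : D L (fun v => p v ∨ q v) :=
  Set.Definable.union hp hq

lemma D.imp {p q : (β → M) → Prop} (hp : D L p) (hq : D L q) : D L (fun v => p v → q v) :=
  (hp.not.or hq).congr fun v => by tauto

lemma D.iff {p q : (β → M) → Prop} (hp : D L p) (hq : D L q) : D L (fun v => (p v ↔ q v)) :=
  ((hp.imp hq).and (hq.imp hp)).congr fun v => by tauto

lemma D.exT [Finite γ] {p : (β → M) → (γ → M) → Prop}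
    (h : D L (fun w : β ⊕ γ → M => p (fun i => w (Sum.inl i)) (fun i => w (Sum.inr i)))) :
    D L (fun v => ∃ y, p v y) :=
  Set.Definable.exists_of_finite h

lemma D.ex {p : (β → M) → M → Prop}
    (h : D L (fun w : β ⊕ Unit → M => p (fun i => w (Sum.inl i)) (w (Sum.inr ())))) :
    D L (fun v => ∃ y, p v y) :=
  (D.exT (γ := Unit) (p := fun v y => p v (y ())) h).congr fun v =>
    ⟨fun ⟨y, hy⟩ => ⟨fun _ => y, hy⟩, fun ⟨y, hy⟩ => ⟨y (), hy⟩⟩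

lemma D.all {p : (β → M) → M → Prop}
    (h : D L (fun w : β ⊕ Unit → M => p (fun i => w (Sum.inl i)) (w (Sum.inr ())))) :
    D L (fun v => ∀ y, p v y) :=
  (D.ex (p := fun v y => ¬ p v y) h.not).not.congr fun v => by push Not; rfl

/-- definable families of subsets of `M` -/
def F1 (L : FirstOrder.Language.{u, u}) {M : Type u} [L.Structure M] {β : Type}
    (C : (β → M) → M → Prop) : Prop :=
  D L (fun w : β ⊕ Unit → M => C (fun i => w (Sum.inl i)) (w (Sum.inr ())))

lemma F1.app {C : (β → M) → M → Prop} (h : F1 L C) (g : (γ → M) → (β → M)) (c : (γ → M) → M)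
    (hg : ∀ i, Tm L (fun v => g v i)) (hc : Tm L c) : D L (fun v => C (g v) (c v)) :=
  D.subst h (fun v => Sum.elim (g v) (fun _ => c v)) (by rintro (i | i); exacts [hg i, hc])

/-- definable families of binary relations on `M` -/
def F2 (L : FirstOrder.Language.{u, u}) {M : Type u} [L.Structure M] {β : Type}
    (C : (β → M) → M → M → Prop) : Prop :=
  D L (fun w : (β ⊕ Unit) ⊕ Unit → M =>
    C (fun i => w (Sum.inl (Sum.inl i))) (w (Sum.inl (Sum.inr ()))) (w (Sum.inr ())))

lemma F2.app {C : (β → M) → M → M → Prop} (h : F2 L C) (g : (γ → M) → (β → M))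
    (c d : (γ → M) → M)
    (hg : ∀ i, Tm L (fun v => g v i)) (hc : Tm L c) (hd : Tm L d) :
    D L (fun v => C (g v) (c v) (d v)) :=
  D.subst h (fun v => Sum.elim (Sum.elim (g v) (fun _ => c v)) (fun _ => d v))
    (by rintro ((i | i) | i); exacts [hg i, hc, hd])

/-- rank filtration -/
def Rk (C : (β → M) → M → Prop) (lt : (β → M) → M → M → Prop) : ℕ → (β → M) → M → Prop
  | 0 => C
  | i + 1 => fun u y => Rk C lt i u y ∧ ∃ z, Rk C lt i u z ∧ lt u z y

lemma Rk.def' {C : (β → M) → M → Prop} {lt : (β → M) → M → M → Prop} (hC : F1 L C)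
    (hlt : F2 L lt) (i : ℕ) : F1 L (Rk C lt i) := by
  induction i with
  | zero => exact hC
  | succ i ih =>
    refine D.and ih (D.ex (D.and ?_ ?_))
    · exact ih.app _ _ (fun i => Tm.coord _) (Tm.coord _)
    · exact hlt.app _ _ _ (fun i => Tm.coord _) (Tm.coord _) (Tm.coord _)

lemma Rk.sub {C : (β → M) → M → Prop} {lt : (β → M) → M → M → Prop} {i : ℕ} {u : β → M} {y : M}
    (h : Rk C lt i u y) : C u y := by
  induction i with
  | zero => exact h
  | succ i ih => exact ih h.1

variable [LinearOrder M]

lemma Rk.card {C : (β → M) → M → Prop} {lt : (β → M) → M → M → Prop} {u : β → M} (P : Finset M)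
    (hP : ∀ z y, C u z → C u y → lt u z y → ∃ p ∈ P, z ≤ p ∧ p < y) (i : ℕ) (y : M)
    (h : Rk C lt i u y) : i ≤ (P.filter (· < y)).card := by
  induction i generalizing y with
  | zero => exact Nat.zero_le _
  | succ i ih =>
    obtain ⟨hy, z, hz, hzy⟩ := h
    obtain ⟨p, hp, hzp, hpy⟩ := hP z y hz.sub hy.sub hzy
    refine lt_of_le_of_lt (ih z hz) (Finset.card_lt_card ?_)
    refine ⟨fun q hq => ?_, fun hsub => ?_⟩
    · simp only [Finset.mem_filter] at hq ⊢
      exact ⟨hq.1, (hq.2.trans_le hzp).trans hpy⟩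
    · have : p ∈ P.filter (· < z) := hsub (by simp [hp, hpy])
      simp only [Finset.mem_filter] at this
      exact absurd this.2 (not_lt.2 hzp)

lemma Rk.exists_rank {C : (β → M) → M → Prop} {lt : (β → M) → M → M → Prop} {u : β → M}
    (P : Finset M)
    (hP : ∀ z y, C u z → C u y → lt u z y → ∃ p ∈ P, z ≤ p ∧ p < y) (y : M)
    (h : C u y) : ∃ i, Rk C lt i u y ∧ ¬ Rk C lt (i + 1) u y := by
  by_contra! hcon
  have : ∀ i, Rk C lt i u y := by
    intro i
    induction i with
    | zero => exact h
    | succ i ih => exact hcon i ih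
  have h1 := Rk.card P hP _ y (this (P.card + 1))
  have h2 := Finset.card_filter_le P (· < y)
  omega

lemma Rk.same {C : (β → M) → M → Prop} {lt : (β → M) → M → M → Prop} {u : β → M} {i : ℕ}
    {y y' : M} (h : Rk C lt i u y) (h' : Rk C lt i u y' ∧ ¬ Rk C lt (i + 1) u y') :
    ¬ lt u y y' := fun hl => h'.2 ⟨h'.1, y, h, hl⟩

/-- `T` is constant on closed intervals avoiding `P` -/
def Cst (T : Set M) (P : Finset M) : Prop :=
  ∀ y y', y ≤ y' → (∀ p ∈ P, y ≤ p → ¬ p ≤ y') → (y ∈ T ↔ y' ∈ T)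

lemma exists_cst {T : Set M} (hT : IsFinUnionPointsIntervals T) : ∃ P, Cst T P := by
  classical
  obtain ⟨Q, I, rfl⟩ := hT
  have f1 : {m : M | ∃ p ∈ I, p.1 = (m : WithBot M)}.Finite := by
    refine ((I.image Prod.fst).finite_toSet.preimage (f := fun m : M => (m : WithBot M))
      (WithBot.coe_injective.injOn)).subset ?_
    rintro m ⟨p, hp, h⟩
    simp only [mem_preimage, Finset.coe_image, mem_image]
    exact ⟨p, hp, h⟩
  have f2 : {m : M | ∃ p ∈ I, p.2 = (m : WithTop M)}.Finite := by
    refine ((I.image Prod.snd).finite_toSet.preimage (f := fun m : M => (m : WithTop M))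
      (WithTop.coe_injective.injOn)).subset ?_
    rintro m ⟨p, hp, h⟩
    simp only [mem_preimage, Finset.coe_image, mem_image]
    exact ⟨p, hp, h⟩
  refine ⟨Q ∪ f1.toFinset ∪ f2.toFinset, fun y y' hyy hP => ?_⟩
  have hy : y ∉ Q := fun h => hP y (by simp [h]) le_rfl hyy
  have hy' : y' ∉ Q := fun h => hP y' (by simp [h]) hyy le_rfl
  simp only [mem_union, Finset.mem_coe, hy, hy', false_or, mem_iUnion, mem_ofPred_eq]
  refine exists_congr fun p => exists_congr fun hp => ?_
  constructor
  · rintro ⟨h1, h2⟩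
    refine ⟨h1.trans_le (by exact_mod_cast hyy), ?_⟩
    by_contra hcon
    rw [not_lt] at hcon
    obtain ⟨m, hm⟩ := WithTop.ne_top_iff_exists.1 (ne_top_of_le_ne_top WithTop.coe_ne_top hcon)
    rw [← hm] at h2 hcon
    have hmem : m ∈ f2.toFinset := by simp only [Finite.mem_toFinset]; exact ⟨p, hp, hm.symm⟩
    exact hP m (by simp only [Finset.mem_union]; exact Or.inr hmem)
      (by exact_mod_cast h2.le) (by exact_mod_cast hcon)
  · rintro ⟨h1, h2⟩
    refine ⟨?_, lt_of_le_of_lt (by exact_mod_cast hyy) h2⟩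
    by_contra hcon
    rw [not_lt] at hcon
    obtain ⟨m, hm⟩ := WithBot.ne_bot_iff_exists.1 (ne_bot_of_le_ne_bot WithBot.coe_ne_bot hcon)
    rw [← hm] at h1 hcon
    have hmem : m ∈ f1.toFinset := by simp only [Finite.mem_toFinset]; exact ⟨p, hp, hm.symm⟩
    exact hP m (by simp only [Finset.mem_union]; exact Or.inl (Or.inr hmem))
      (by exact_mod_cast hcon) (by exact_mod_cast h1.le)

/-- boundary points -/
def Bd (T : Set M) : Set M :=
  {y | ∀ a c, a < y → y < c → ∃ z, a < z ∧ z < c ∧ ¬ (z ∈ T ↔ y ∈ T)}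

lemma exists_gap [NoMinOrder M] [NoMaxOrder M] (P : Finset M) (y : M) :
    ∃ a c, a < y ∧ y < c ∧ ∀ p ∈ P, a < p → p < c → p = y := by
  classical
  induction P using Finset.induction_on with
  | empty =>
    obtain ⟨a, ha⟩ := exists_lt y
    obtain ⟨c, hc⟩ := exists_gt y
    exact ⟨a, c, ha, hc, by simp⟩
  | insert q P hq ih =>
    obtain ⟨a, c, ha, hc, h⟩ := ih
    rcases lt_trichotomy q y with hqy | hqy | hqy
    · refine ⟨max a q, c, max_lt ha hqy, hc, fun p hp hap hpc => ?_⟩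
      rcases Finset.mem_insert.1 hp with rfl | hp
      · exact absurd (le_max_right a p) (not_le.2 hap)
      · exact h p hp ((le_max_left _ _).trans_lt hap) hpc
    · refine ⟨a, c, ha, hc, fun p hp hap hpc => ?_⟩
      rcases Finset.mem_insert.1 hp with rfl | hp
      · exact hqy
      · exact h p hp hap hpc
    · refine ⟨a, min c q, ha, lt_min hc hqy, fun p hp hap hpc => ?_⟩
      rcases Finset.mem_insert.1 hp with rfl | hp
      · exact absurd (min_le_right c p) (not_le.2 hpc)
      · exact h p hp hap (hpc.trans_le (min_le_left _ _))

lemma bd_subset [NoMinOrder M] [NoMaxOrder M] {T : Set M} {P : Finset M} (h : Cst T P) :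
    Bd T ⊆ ↑P := by
  intro y hy
  by_contra hyP
  obtain ⟨a, c, ha, hc, hg⟩ := exists_gap P y
  obtain ⟨z, haz, hzc, hz⟩ := hy a c ha hc
  apply hz
  rcases le_total z y with hzy | hzy
  · refine h z y hzy fun p hp h1 h2 => hyP ?_
    rw [← hg p hp (haz.trans_le h1) (h2.trans_lt hc)]; exact hp
  · refine (h y z hzy fun p hp h1 h2 => hyP ?_).symm
    rw [← hg p hp (ha.trans_le h1) (h2.trans_lt hzc)]; exact hp

lemma exists_cst_bd [DenselyOrdered M] [NoMinOrder M] [NoMaxOrder M] {T : Set M}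
    (hT : IsFinUnionPointsIntervals T) : ∃ P, Cst T P ∧ (P : Set M) = Bd T := by
  classical
  have hex := exists_cst hT
  obtain ⟨P, hP, hmin⟩ := WellFounded.has_min (wellFounded_lt : WellFounded ((· < ·) :
    Finset M → Finset M → Prop)) {P | Cst T P} hex
  refine ⟨P, hP, Subset.antisymm (fun p hp => ?_) (bd_subset hP)⟩
  by_contra hpb
  refine hmin (P.erase p) ?_ (Finset.erase_ssubset hp)
  simp only [Bd, mem_ofPred_eq, not_forall, not_exists, not_and, not_not] at hpb
  obtain ⟨a, c, ha, hc, hac⟩ := hpb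
  intro y y' hyy' hy
  by_cases hp' : y ≤ p ∧ p ≤ y'
  · have e1 : y ∈ T ↔ p ∈ T := by
      rcases hp'.1.eq_or_lt with rfl | hlt
      · rfl
      obtain ⟨w, hw1, hw2⟩ := exists_between (max_lt ha hlt)
      rw [← hac w ((le_max_left _ _).trans_lt hw1) (hw2.trans hc)]
      refine hP y w ((le_max_right _ _).trans hw1.le) fun q hq h1 h2 => ?_
      exact hy q (Finset.mem_erase.2 ⟨(h2.trans_lt hw2).ne, hq⟩) h1
        ((h2.trans hw2.le).trans hp'.2)
    have e2 : y' ∈ T ↔ p ∈ T := by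
      rcases hp'.2.eq_or_lt with h | hlt
      · rw [h]
      obtain ⟨w, hw1, hw2⟩ := exists_between (lt_min hc hlt)
      rw [← hac w (ha.trans hw1) (hw2.trans_le (min_le_left _ _))]
      refine (hP w y' (hw2.le.trans (min_le_right _ _)) fun q hq h1 h2 => ?_).symm
      exact hy q (Finset.mem_erase.2 ⟨(hw1.trans_le h1).ne', hq⟩)
        (hp'.1.trans (hw1.le.trans h1)) h2
    rw [e1, e2]
  · refine hP y y' hyy' fun q hq h1 h2 => ?_
    by_cases hqp : q = p
    · subst hqp; exact hp' ⟨h1, h2⟩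
    · exact hy q (Finset.mem_erase.2 ⟨hqp, hq⟩) h1 h2

lemma F1.tame (hM : IsOMinimal L M) {C : (β → M) → M → Prop} (hC : F1 L C) (u : β → M) :
    IsFinUnionPointsIntervals {y | C u y} := by
  apply hM.tame
  exact hC.app (γ := Fin 1) (fun _ => u) (fun v => v 0) (fun i => Tm.const _) (Tm.coord _)

lemma D.lt (hM : IsOMinimal L M) {c d : (β → M) → M} (hc : Tm L c) (hd : Tm L d) :
    D L (fun v => c v < d v) := by
  have h : D L (fun x : Fin 2 → M => x 0 < x 1) := hM.definable_lt.mono (empty_subset _)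
  refine h.subst (fun v => ![c v, d v]) ?_
  intro i
  fin_cases i
  exacts [hc, hd]

lemma F1.bd (hM : IsOMinimal L M) {C : (β → M) → M → Prop} (hC : F1 L C) :
    F1 L (fun u y => y ∈ Bd {y | C u y}) := by
  refine D.all (D.all (D.imp (D.lt hM ?_ ?_) (D.imp (D.lt hM ?_ ?_) (D.ex (D.and (D.lt hM ?_ ?_)
    (D.and (D.lt hM ?_ ?_) (D.not (D.iff (hC.app _ _ (fun i => ?_) ?_)
      (hC.app _ _ (fun i => ?_) ?_))))))))) <;> exact Tm.coord _

/-- countability of traces, `k` parameters -/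
def Cnt (L : FirstOrder.Language.{u, u}) (M : Type u) [L.Structure M] (k : ℕ) : Prop :=
  ∀ (α : Type) [Finite α] (X : Set (α → M)), X.Countable → D L (fun x => x ∈ X) →
    ∀ R : (α → M) → (Fin k → M) → Prop,
    D L (fun w : α ⊕ Fin k → M => R (fun i => w (Sum.inl i)) (fun i => w (Sum.inr i))) →
    {S : Set (α → M) | ∃ b, S = {x | x ∈ X ∧ R x b}}.Countable

lemma step {k : ℕ} (ih : Cnt L M k) [Finite α] (X : Set (α → M)) (hXc : X.Countable)
    (hX : D L (fun x => x ∈ X)) {T C : (α ⊕ Fin k → M) → M → Prop}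
    {lt : (α ⊕ Fin k → M) → M → M → Prop} (hT : F1 L T) (hC : F1 L C) (hlt : F2 L lt)
    (hfin : ∀ u, ∃ P : Finset M, ∀ z y, C u z → C u y → lt u z y → ∃ p ∈ P, z ≤ p ∧ p < y)
    (hsame : ∀ x₀ ∈ X, ∀ b y y', C (Sum.elim x₀ b) y → C (Sum.elim x₀ b) y' →
      ¬ lt (Sum.elim x₀ b) y y' → ¬ lt (Sum.elim x₀ b) y' y →
      ∀ x ∈ X, (T (Sum.elim x b) y ↔ T (Sum.elim x b) y')) :
    {S : Set (α → M) | ∃ x₀ ∈ X, ∃ b y, C (Sum.elim x₀ b) y ∧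
      S = {x | x ∈ X ∧ T (Sum.elim x b) y}}.Countable := by
  let XX : Set (α ⊕ α → M) :=
    {w | (fun i => w (Sum.inl i)) ∈ X ∧ (fun i => w (Sum.inr i)) ∈ X}
  have hXX : D L (fun w => w ∈ XX) :=
    (hX.subst _ fun i => Tm.coord _).and (hX.subst _ fun i => Tm.coord _)
  have hXXc : XX.Countable := by
    refine ((hXc.prod hXc).image (fun q => Sum.elim q.1 q.2)).mono ?_
    intro w hw
    exact ⟨(_, _), ⟨hw.1, hw.2⟩, Sum.elim_comp_inl_inr w⟩
  let R : ℕ → (α ⊕ α → M) → (Fin k → M) → Prop := fun i w b =>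
    ∃ y, (Rk C lt i (Sum.elim (fun i => w (Sum.inr i)) b) y ∧
      ¬ Rk C lt (i + 1) (Sum.elim (fun i => w (Sum.inr i)) b) y) ∧
      T (Sum.elim (fun i => w (Sum.inl i)) b) y
  have hR : ∀ i, {S : Set (α ⊕ α → M) | ∃ b, S = {x | x ∈ XX ∧ R i x b}}.Countable := by
    intro i
    refine ih (α ⊕ α) XX hXXc hXX (R i) (D.ex (D.and (D.and ?_ (D.not ?_)) ?_))
    · refine (Rk.def' hC hlt i).app _ _ ?_ (Tm.coord _)
      rintro (j | j) <;> exact Tm.coord _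
    · refine (Rk.def' hC hlt (i + 1)).app _ _ ?_ (Tm.coord _)
      rintro (j | j) <;> exact Tm.coord _
    · refine hT.app _ _ ?_ (Tm.coord _)
      rintro (j | j) <;> exact Tm.coord _
  refine (countable_iUnion fun i => hXc.biUnion fun x₀ _ =>
    (hR i).image (fun S => {x | Sum.elim x x₀ ∈ S})).mono ?_
  rintro S ⟨x₀, hx₀, b, y, hy, rfl⟩
  obtain ⟨P, hP⟩ := hfin (Sum.elim x₀ b)
  obtain ⟨i, hi⟩ := Rk.exists_rank P hP y hy
  refine mem_iUnion.2 ⟨i, mem_iUnion₂.2 ⟨x₀, hx₀, _, ⟨b, rfl⟩, ?_⟩⟩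
  ext x
  constructor
  · rintro ⟨⟨hx, -⟩, y', hy', hT'⟩
    exact ⟨hx, (hsame x₀ hx₀ b y y' hy hy'.1.sub (Rk.same hi.1 hy') (Rk.same hy'.1 hi) x hx).2 hT'⟩
  · rintro ⟨hx, hT'⟩
    exact ⟨⟨hx, hx₀⟩, y, hi, hT'⟩

theorem cnt (hM : IsOMinimal L M) (k : ℕ) : Cnt L M k := by
  have := hM.denselyOrdered
  have := hM.noMinOrder
  have := hM.noMaxOrder
  induction k with
  | zero =>
    intro α _ X _ _ R _
    refine (countable_singleton {x | x ∈ X ∧ R x Fin.elim0}).mono ?_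
    rintro S ⟨b, rfl⟩
    rw [Subsingleton.elim b Fin.elim0]; rfl
  | succ k ih =>
    intro α _ X hXc hX R hR
    let T : (α ⊕ Fin k → M) → M → Prop := fun u y =>
      R (fun i => u (Sum.inl i)) (Fin.snoc (α := fun _ => M) (fun i => u (Sum.inr i)) y)
    have hT : F1 L T := by
      refine hR.subst (fun w => Sum.elim (fun i => w (Sum.inl (Sum.inl i)))
        (Fin.snoc (α := fun _ => M) (fun i => w (Sum.inl (Sum.inr i))) (w (Sum.inr ())))) ?_
      rintro (i | i)
      · exact Tm.coord _
      · refine Fin.lastCases ?_ (fun j => ?_) i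
        · simp only [Sum.elim_inr, Fin.snoc_last]; exact Tm.coord _
        · simp only [Sum.elim_inr, Fin.snoc_castSucc]; exact Tm.coord _
    let B : (α ⊕ Fin k → M) → M → Prop := fun u y => y ∈ Bd {y | T u y}
    have hB : F1 L B := hT.bd hM
    let E : (α ⊕ Fin k → M) → M → Prop := fun u y =>
      ∃ x, x ∈ X ∧ B (Sum.elim x (fun i => u (Sum.inr i))) y
    have hE : F1 L E := by
      refine D.exT (D.and (hX.subst _ fun i => Tm.coord _) (hB.app _ _ ?_ (Tm.coord _)))
      rintro (i | i) <;> exact Tm.coord _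
    have c1 := step ih X hXc hX (T := T) (C := B) (lt := fun _ z y => z < y) hT hB
      (D.lt hM (Tm.coord _) (Tm.coord _))
      (by
        intro u
        obtain ⟨P, -, hP⟩ := exists_cst_bd (hT.tame hM u)
        refine ⟨P, fun z y hz _ hzy => ⟨z, ?_, le_rfl, hzy⟩⟩
        rw [← Finset.mem_coe, hP]; exact hz)
      (by
        intro x₀ _ b y y' _ _ h1 h2 x _
        rw [le_antisymm (not_lt.1 h2) (not_lt.1 h1)])
    have key : ∀ x ∈ X, ∀ b y y', y ≤ y' → ¬ E (Sum.elim x b) y → ¬ E (Sum.elim x b) y' →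
        (¬ ∃ e, E (Sum.elim x b) e ∧ y < e ∧ e < y') →
        (T (Sum.elim x b) y ↔ T (Sum.elim x b) y') := by
      intro x hx b y y' hyy hy hy' hno
      obtain ⟨P, hP, hPB⟩ := exists_cst_bd (hT.tame hM (Sum.elim x b))
      refine hP y y' hyy fun p hp h1 h2 => ?_
      have hpE : E (Sum.elim x b) p := by
        refine ⟨x, hx, ?_⟩
        rw [← Finset.mem_coe, hPB] at hp; exact hp
      rcases h1.eq_or_lt with rfl | h1
      · exact hy hpE
      rcases h2.eq_or_lt with rfl | h2
      · exact hy' hpE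
      exact hno ⟨p, hpE, h1, h2⟩
    have c2 := step ih X hXc hX (T := T) (C := fun u y => ¬ E u y)
      (lt := fun u z y => ∃ e, E u e ∧ z < e ∧ e < y) hT hE.not
      (D.ex (D.and (hE.app (fun w i => w (Sum.inl (Sum.inl (Sum.inl i)))) (fun w => w (Sum.inr ()))
        (fun i => Tm.coord _) (Tm.coord _))
        (D.and (D.lt hM (Tm.coord _) (Tm.coord _)) (D.lt hM (Tm.coord _) (Tm.coord _)))))
      (by
        intro u
        obtain ⟨P, hP⟩ := exists_cst (hE.tame hM u)
        refine ⟨P, ?_⟩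
        rintro z y hz hy ⟨e, he, hze, hey⟩
        by_contra! hcon
        exact hz ((hP z e hze.le fun p hp h1 h2 =>
          absurd (hcon p hp h1) (not_le.2 (h2.trans_lt hey))).2 he))
      (by
        intro x₀ _ b y y' hy hy' h1 h2 x hx
        rcases le_total y y' with h | h
        · exact key x hx b y y' h hy hy' h1
        · exact (key x hx b y' y h hy' hy h2).symm)
    refine ((c1.union c2).union (countable_singleton ∅)).mono ?_
    rintro S ⟨b, rfl⟩
    rcases X.eq_empty_or_nonempty with rfl | ⟨x₁, hx₁⟩
    · right; simp
    left
    have hb : ∀ x, R x b = T (Sum.elim x (Fin.init b)) (b (Fin.last k)) := by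
      intro x
      change R x b = R x (Fin.snoc (α := fun _ => M) (Fin.init b) (b (Fin.last k)))
      rw [Fin.snoc_init_self]
    simp only [hb]
    by_cases hEb : E (Sum.elim x₁ (Fin.init b)) (b (Fin.last k))
    · obtain ⟨x₀, hx₀, h⟩ := hEb
      exact Or.inl ⟨x₀, hx₀, Fin.init b, _, h, rfl⟩
    · exact Or.inr ⟨x₁, hx₁, Fin.init b, _, hEb, rfl⟩

end

end OPQ

/-- No topological space definable in an o-minimal structure is homeomorphic to the
one-point compactification of `ℚ` (with `ℚ` carrying its usual topology). -/
theorem no_definable_top_space_homeomorphic_to_onePoint_rat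
    {L : FirstOrder.Language.{u, u}} {M : Type u} [L.Structure M] [LinearOrder M]
    (hM : IsOMinimal L M) {n : ℕ} (A : Set (Fin n → M)) (t : TopologicalSpace A)
    (h : IsDefinableTopSpace L A t) :
    IsEmpty (@Homeomorph A (OnePoint ℚ) t _) := by
  refine ⟨fun e => Rat.not_secondCountableTopology_opc ?_⟩
  obtain ⟨hA, k, ψ, S, -, hbasis⟩ := h
  have hAc : A.Countable := by
    have : Countable (OnePoint ℚ) := inferInstanceAs (Countable (Option ℚ))
    exact Set.countable_coe_iff.1 (e.toEquiv.countable_iff.2 this)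
  have hψ : OPQ.D L (fun w : Fin n ⊕ Fin k → M => ψ.Realize w) :=
    (Set.empty_definable_iff.2 ⟨ψ, rfl⟩ : (∅ : Set M).Definable L _).mono (empty_subset _)
  have hc := OPQ.cnt hM k (Fin n) A hAc hA (fun x b => ψ.Realize (Sum.elim x b))
    (hψ.subst _ (by rintro (i | i) <;> exact OPQ.Tm.coord _))
  have hc2 : ((fun b => {x : A | ψ.Realize (Sum.elim (x : Fin n → M) b)}) '' S).Countable := by
    refine (hc.image (fun s => {x : A | (x : Fin n → M) ∈ s})).mono ?_
    rintro _ ⟨b, -, rfl⟩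
    refine ⟨_, ⟨b, rfl⟩, ?_⟩
    ext x
    exact ⟨fun h => h.2, fun h => ⟨x.2, h⟩⟩
  have : SecondCountableTopology A := hbasis.secondCountableTopology hc2
  exact e.symm.secondCountableTopology
end
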